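/- arXiv:2502.17292 — 8 statements merged into one kernel-verified Lean document; each statement's English description precedes it below -/
import Mathlib

section
/- Let d ≥ 1, let c ≥ 1, and let z_1, …, z_n ∈ ℝ^d satisfy ‖z_i‖₂ ≤ 1 for all i. For k = 1, …, n define the Gram matrix A_k = c·I_d + Σ_{i<k} z_i z_iᵀ (so A_1 = c·I_d). Then Σ_{i=1}^n z_iᵀ A_i⁻¹ z_i ≤ 2d·log(c + n/d) + 2·log(c). -/
/-!
By the matrix determinant lemma, `det Aₖ₊₁ = det Aₖ * (1 + zₖᵀ Aₖ⁻¹ zₖ)`, so the logarithms of these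
factors telescope to `log det Aₙ - log det A₀`. Each `zₖᵀ Aₖ⁻¹ zₖ` lies in `[0, 1]` because
`1 ≤ Aₖ` in the Loewner order, and on that interval `x ≤ 2 log (1 + x)`. Finally, AM-GM for the
eigenvalues bounds `det Aₙ` in terms of `tr Aₙ`, which grows by at most one at each step.
-/

section EllipticalPotential

open Matrix
open scoped ComplexOrder MatrixOrder

lemma le_two_mul_log_one_add {x : ℝ} (hx₀ : 0 ≤ x) (hx₂ : x ≤ 2) : x ≤ 2 * Real.log (1 + x) :=
  calc
    x ≤ 2 * (2 * x / (x + 2)) := by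
      rw [← mul_div_assoc, le_div_iff₀ (by linarith)]
      nlinarith
    _ ≤ 2 * Real.log (1 + x) := by
      gcongr
      exact Real.le_log_one_add_of_nonneg hx₀

variable {ι : Type*}

lemma det_add_vecMulVec [Fintype ι] [DecidableEq ι] {R : Type*} [CommRing R] {A : Matrix ι ι R}
    (hA : IsUnit A.det) (u v : ι → R) :
    (A + vecMulVec u v).det = A.det * (1 + v ⬝ᵥ (A⁻¹ *ᵥ u)) := by
  rw [vecMulVec_eq Unit, det_add_replicateCol_mul_replicateRow hA, det_unique (n := Unit),
    Matrix.mul_assoc, ← replicateCol_mulVec, Matrix.add_apply, one_apply_eq,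
    replicateRow_mul_replicateCol_apply]

section Loewner

variable {𝕜 : Type*} [RCLike 𝕜] {A B : Matrix ι ι 𝕜}

lemma posDef_of_le (hA : A.PosDef) (hAB : A ≤ B) : B.PosDef := by
  simpa only [add_sub_cancel] using hA.add_posSemidef (le_iff.mp hAB)

-- `B - A` and `A⁻¹ - B⁻¹` are the two Schur complements of the block matrix `[B, 1; 1, A⁻¹]`.
lemma inv_le_inv_of_posDef_of_le [Fintype ι] [DecidableEq ι] (hA : A.PosDef) (hAB : A ≤ B) :
    B⁻¹ ≤ A⁻¹ := by
  have hB : B.PosDef := posDef_of_le hA hAB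
  let _ := hA.isUnit.invertible
  let _ := hA.inv.isUnit.invertible
  let _ := hB.isUnit.invertible
  have schur₁ := PosDef.fromBlocks₁₁ (1 : Matrix ι ι 𝕜) A⁻¹ hB
  have schur₂ := PosDef.fromBlocks₂₂ B (1 : Matrix ι ι 𝕜) hA.inv
  simp only [conjTranspose_one, Matrix.one_mul, Matrix.mul_one, inv_inv_of_invertible]
    at schur₁ schur₂
  exact schur₁.mp (schur₂.mpr hAB)

lemma one_le_smul_one [DecidableEq ι] {c : ℝ} (hc : 1 ≤ c) : (1 : Matrix ι ι 𝕜) ≤ c • 1 := by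
  rw [le_iff]
  simpa only [sub_smul, one_smul] using
    (PosSemidef.one (n := ι) (R := 𝕜)).smul (sub_nonneg.mpr hc)

end Loewner

lemma dotProduct_inv_mulVec_le_dotProduct_self [Fintype ι] [DecidableEq ι] {A : Matrix ι ι ℝ}
    (hA : 1 ≤ A) (x : ι → ℝ) : x ⬝ᵥ (A⁻¹ *ᵥ x) ≤ x ⬝ᵥ x := by
  have hinv : A⁻¹ ≤ 1 := by simpa only [inv_one] using inv_le_inv_of_posDef_of_le .one hA
  have hnonneg := (le_iff.mp hinv).dotProduct_mulVec_nonneg x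
  rwa [star_trivial, sub_mulVec, one_mulVec, dotProduct_sub, sub_nonneg] at hnonneg

lemma log_det_le_card_mul_log_trace_div_card [Fintype ι] [DecidableEq ι] {A : Matrix ι ι ℝ}
    (hA : A.PosDef) :
    Real.log A.det ≤ Fintype.card ι * Real.log (A.trace / Fintype.card ι) := by
  rcases isEmpty_or_nonempty ι with hι | hι
  · simp
  have hcard : (0 : ℝ) < Fintype.card ι := mod_cast Fintype.card_pos
  have hdet : A.det = ∏ i, hA.1.eigenvalues i := hA.1.det_eq_prod_eigenvalues
  have htrace : A.trace = ∑ i, hA.1.eigenvalues i := hA.1.trace_eq_sum_eigenvalues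
  have jensen := strictConcaveOn_log_Ioi.concaveOn.le_map_sum (t := Finset.univ)
    (w := fun _ ↦ (Fintype.card ι : ℝ)⁻¹) (p := hA.1.eigenvalues) (fun _ _ ↦ by positivity)
    (by simp [hcard.ne']) (fun i _ ↦ hA.eigenvalues_pos i)
  rw [← Finset.smul_sum, ← Finset.smul_sum, ← htrace,
    ← Real.log_prod fun i _ ↦ (hA.eigenvalues_pos i).ne', ← hdet, smul_eq_mul, smul_eq_mul,
    inv_mul_le_iff₀ hcard] at jensen
  rwa [div_eq_inv_mul]

/-- The regularized Gram matrix `V + ∑_{i<k} zᵢzᵢᵀ` of the first `k` vectors of the sequence `z`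
(the design matrix of ridge regression), where `V` is the regularizer. -/
def regularizedGram (V : Matrix ι ι ℝ) (z : ℕ → ι → ℝ) (k : ℕ) : Matrix ι ι ℝ :=
  V + ∑ i ∈ Finset.range k, vecMulVec (z i) (z i)

section RegularizedGram

variable {V : Matrix ι ι ℝ}

lemma regularizedGram_succ (V : Matrix ι ι ℝ) (z : ℕ → ι → ℝ) (k : ℕ) :
    regularizedGram V z (k + 1) = regularizedGram V z k + vecMulVec (z k) (z k) := by
  simp only [regularizedGram, Finset.sum_range_succ, add_assoc]

lemma le_regularizedGram [Finite ι] (V : Matrix ι ι ℝ) (z : ℕ → ι → ℝ) (k : ℕ) :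
    V ≤ regularizedGram V z k :=
  le_add_of_nonneg_right <| Finset.sum_nonneg fun i _ ↦ nonneg_iff_posSemidef.mpr <| by
    simpa only [star_trivial] using posSemidef_vecMulVec_self_star (z i)

lemma posDef_regularizedGram [Finite ι] (hV : V.PosDef) (z : ℕ → ι → ℝ) (k : ℕ) :
    (regularizedGram V z k).PosDef :=
  posDef_of_le hV (le_regularizedGram V z k)

lemma trace_regularizedGram [Fintype ι] (V : Matrix ι ι ℝ) (z : ℕ → ι → ℝ) (k : ℕ) :
    (regularizedGram V z k).trace = V.trace + ∑ i ∈ Finset.range k, z i ⬝ᵥ z i := by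
  simp only [regularizedGram, trace_add, trace_sum, trace_vecMulVec]

variable [Fintype ι] [DecidableEq ι]

lemma dotProduct_regularizedGram_inv_mulVec_nonneg (hV : V.PosDef) (z : ℕ → ι → ℝ) (k : ℕ)
    (x : ι → ℝ) : 0 ≤ x ⬝ᵥ ((regularizedGram V z k)⁻¹ *ᵥ x) := by
  simpa only [star_trivial] using
    (posDef_regularizedGram hV z k).inv.posSemidef.dotProduct_mulVec_nonneg x

lemma log_det_regularizedGram_succ (hV : V.PosDef) (z : ℕ → ι → ℝ) (k : ℕ) :
    Real.log (regularizedGram V z (k + 1)).det = Real.log (regularizedGram V z k).det +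
      Real.log (1 + z k ⬝ᵥ ((regularizedGram V z k)⁻¹ *ᵥ z k)) := by
  have hdet := (posDef_regularizedGram hV z k).det_pos.ne'
  have hnonneg := dotProduct_regularizedGram_inv_mulVec_nonneg hV z k (z k)
  rw [regularizedGram_succ, det_add_vecMulVec hdet.isUnit, Real.log_mul hdet (by positivity)]

lemma sum_log_one_add_dotProduct_regularizedGram_inv_mulVec (hV : V.PosDef) (z : ℕ → ι → ℝ)
    (n : ℕ) :
    ∑ i ∈ Finset.range n, Real.log (1 + z i ⬝ᵥ ((regularizedGram V z i)⁻¹ *ᵥ z i)) =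
      Real.log (regularizedGram V z n).det - Real.log V.det := by
  calc
    _ = ∑ i ∈ Finset.range n, (Real.log (regularizedGram V z (i + 1)).det -
          Real.log (regularizedGram V z i).det) :=
      Finset.sum_congr rfl fun i _ ↦ by rw [log_det_regularizedGram_succ hV, add_sub_cancel_left]
    _ = Real.log (regularizedGram V z n).det - Real.log (regularizedGram V z 0).det :=
      Finset.sum_range_sub (fun k ↦ Real.log (regularizedGram V z k).det) n
    _ = _ := by simp only [regularizedGram, Finset.range_zero, Finset.sum_empty, add_zero]

lemma sum_dotProduct_regularizedGram_inv_mulVec_le_log_det (hV : 1 ≤ V) {z : ℕ → ι → ℝ} {n : ℕ}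
    (hz : ∀ i < n, z i ⬝ᵥ z i ≤ 2) :
    ∑ i ∈ Finset.range n, z i ⬝ᵥ ((regularizedGram V z i)⁻¹ *ᵥ z i) ≤
      2 * (Real.log (regularizedGram V z n).det - Real.log V.det) := by
  have hpos : V.PosDef := posDef_of_le .one hV
  rw [← sum_log_one_add_dotProduct_regularizedGram_inv_mulVec hpos, Finset.mul_sum]
  refine Finset.sum_le_sum fun i hi ↦ le_two_mul_log_one_add
    (dotProduct_regularizedGram_inv_mulVec_nonneg hpos z i (z i)) ?_
  exact (dotProduct_inv_mulVec_le_dotProduct_self (hV.trans (le_regularizedGram V z i)) (z i)).trans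
    (hz i (Finset.mem_range.mp hi))

lemma log_det_regularizedGram_le (hV : V.PosDef) {z : ℕ → ι → ℝ} {n : ℕ}
    (hz : ∀ i < n, z i ⬝ᵥ z i ≤ 1) :
    Real.log (regularizedGram V z n).det ≤
      Fintype.card ι * Real.log ((V.trace + n) / Fintype.card ι) := by
  rcases isEmpty_or_nonempty ι with hι | hι
  · simp
  have hgram := posDef_regularizedGram hV z n
  have htrace : (regularizedGram V z n).trace ≤ V.trace + n := by
    rw [trace_regularizedGram]
    gcongr
    simpa using Finset.sum_le_card_nsmul (Finset.range n) (fun i ↦ z i ⬝ᵥ z i) 1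
      fun i hi ↦ hz i (Finset.mem_range.mp hi)
  have htrace_pos := hgram.trace_pos
  refine (log_det_le_card_mul_log_trace_div_card hgram).trans ?_
  gcongr

end RegularizedGram

theorem elliptical_potential_squared_general [Fintype ι] [DecidableEq ι] {V : Matrix ι ι ℝ}
    (hV : 1 ≤ V) {z : ℕ → ι → ℝ} {n : ℕ} (hz : ∀ i < n, z i ⬝ᵥ z i ≤ 1) :
    ∑ i ∈ Finset.range n, z i ⬝ᵥ ((regularizedGram V z i)⁻¹ *ᵥ z i) ≤
      2 * (Fintype.card ι * Real.log ((V.trace + n) / Fintype.card ι) - Real.log V.det) := by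
  refine (sum_dotProduct_regularizedGram_inv_mulVec_le_log_det hV fun i hi ↦
    (hz i hi).trans one_le_two).trans ?_
  gcongr
  exact log_det_regularizedGram_le (posDef_of_le .one hV) hz

end EllipticalPotential

open Matrix in
/-- **Elliptical potential lemma (squared version).** For vectors `z₁,…,zₙ ∈ ℝ^d` with
`‖zᵢ‖₂ ≤ 1` and Gram matrices `Aₖ = c·I + ∑_{i<k} zᵢzᵢᵀ` (with `c ≥ 1`, `d ≥ 1`),
`∑_{i=1}^n zᵢᵀ Aᵢ⁻¹ zᵢ ≤ 2d·log(c + n/d) + 2·log c`. -/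
theorem elliptical_potential_squared
    (d : ℕ) (hd : 1 ≤ d) (c : ℝ) (hc : 1 ≤ c) (n : ℕ)
    (z : ℕ → Fin d → ℝ)
    (hz : ∀ i < n, Real.sqrt (∑ j, z i j ^ 2) ≤ 1)
    (A : ℕ → Matrix (Fin d) (Fin d) ℝ)
    (hA : ∀ k, A k = c • (1 : Matrix (Fin d) (Fin d) ℝ) +
      ∑ i ∈ Finset.range k, vecMulVec (z i) (z i)) :
    ∑ i ∈ Finset.range n, z i ⬝ᵥ ((A i)⁻¹ *ᵥ z i)
      ≤ 2 * d * Real.log (c + n / d) + 2 * Real.log c := by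
  obtain rfl : A = regularizedGram (c • 1) z := funext hA
  have hnorm : ∀ i < n, z i ⬝ᵥ z i ≤ 1 := fun i hi ↦ by
    simpa only [dotProduct, ← pow_two, Real.sqrt_le_one] using hz i hi
  have hd₀ : (d : ℝ) ≠ 0 := by positivity
  have hmean : (c * d + n) / d = c + n / d := by field_simp
  have hlog : 0 ≤ Real.log c := Real.log_nonneg hc
  have hdlog : 0 ≤ d * Real.log c := by positivity
  have bound := elliptical_potential_squared_general (one_le_smul_one hc) hnorm
  simp only [trace_smul, trace_one, det_smul, det_one, Fintype.card_fin, smul_eq_mul, mul_one,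
    Real.log_pow, hmean] at bound
  linarith
end

section
/- Let x_1, …, x_n ∈ ℝ^d be vectors with ‖x_i‖₂ ≤ 1 for all i ∈ [n], and set Σ = 18·I_d + Σ_{i=1}^n x_i x_iᵀ. Then there exists a subset S ⊆ [n] with |S| ≤ n/2 such that 18·I_d + Σ_{i∈S} x_i x_iᵀ ⪰ (1/9)·Σ, where ⪰ denotes the Loewner (positive-semidefinite) order. -/
/-!
It is enough to find at least half of the matrices `xᵢxᵢᵀ` whose sum stays below
`16 I + (8/9) X`, where `X` is the sum of all of them; the remaining indices then form `S`. The
argument works for arbitrary positive semidefinite matrices of trace at most one.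

Instead of interlacing families, this uses the barrier method of Batson, Spielman and Srivastava.
Start from the barrier `16 I` and, before each selection, raise it by a multiple `δ` of `X`. If `M`
is the gap between the barrier and the current partial sum, the potential `tr (M⁻¹ X)` drops when
the barrier is raised and grows when a matrix is selected. Averaging over the indices still
available shows that some selection does not outweigh the drop as soon as `δ⁻¹` plus the potential
is at most their number. Initially the potential is at most `n / 16`, so the `k`-th shift may
be `1 / (15n/16 - k)`. After `n / 2` steps the shifts add up to about `log (15/7) < 8/9`.
-/

section TraceInequalities

open RCLike Matrix
open scoped ComplexOrder MatrixOrder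

variable {𝕜 m : Type*} [RCLike 𝕜] [Fintype m] {A B C : Matrix m m 𝕜}

lemma re_trace_nonneg (hA : 0 ≤ A) : 0 ≤ re A.trace :=
  (nonneg_iff.mp hA.posSemidef.trace_nonneg).1

lemma re_trace_mul_nonneg (hA : 0 ≤ A) (hB : 0 ≤ B) : 0 ≤ re (A * B).trace := by
  classical
  obtain ⟨R, rfl⟩ := CStarAlgebra.nonneg_iff_eq_mul_star_self.mp hB
  rw [← mul_assoc, trace_mul_comm, ← mul_assoc]
  exact re_trace_nonneg (star_left_conjugate_nonneg hA R)

lemma re_trace_mul_le_re_trace_mul (h : A ≤ B) (hC : 0 ≤ C) :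
    re (A * C).trace ≤ re (B * C).trace := by
  simpa only [sub_mul, trace_sub, map_sub, sub_nonneg] using
    re_trace_mul_nonneg (sub_nonneg.mpr h) hC

lemma le_re_trace_smul_one [DecidableEq m] (hA : 0 ≤ A) : A ≤ re A.trace • (1 : Matrix m m 𝕜) := by
  rw [← Algebra.algebraMap_eq_smul_one]
  have hH := hA.posSemidef.isHermitian
  refine le_algebraMap_of_spectrum_le (fun r hr ↦ ?_) hH.isSelfAdjoint
  obtain ⟨i, rfl⟩ := hH.spectrum_real_eq_range_eigenvalues ▸ hr
  rw [hH.trace_eq_sum_eigenvalues, map_sum]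
  simp only [ofReal_re]
  exact Finset.single_le_sum (fun j _ ↦ hA.posSemidef.eigenvalues_nonneg j) (Finset.mem_univ i)

lemma mul_mul_self_le_re_trace_smul (hA : 0 ≤ A) (hB : 0 ≤ B) :
    A * B * A ≤ re (B * A).trace • A := by
  classical
  obtain ⟨R, rfl⟩ := CStarAlgebra.nonneg_iff_eq_star_mul_self.mp hA
  have h := star_left_conjugate_le_conjugate
    (le_re_trace_smul_one (star_right_conjugate_nonneg hB R)) R
  rw [trace_mul_cycle, trace_mul_comm] at h
  simpa only [mul_smul_comm, smul_mul_assoc, mul_one, mul_assoc] using h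

end TraceInequalities

section Inverse

open RCLike Matrix
open scoped ComplexOrder MatrixOrder

variable {𝕜 m : Type*} [RCLike 𝕜] {A M P Q : Matrix m m 𝕜}

lemma posDef_of_posDef_le (hP : P.PosDef) (h : P ≤ Q) : Q.PosDef :=
  add_sub_cancel P Q ▸ hP.add_posSemidef h

variable [Fintype m] [DecidableEq m]

/-- The inverse lies above its tangent at `Q`, being operator convex. -/
lemma inv_add_inv_mul_sub_mul_inv_le (hP : P.PosDef) (hQ : Q.PosDef) :
    Q⁻¹ + Q⁻¹ * (Q - P) * Q⁻¹ ≤ P⁻¹ := by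
  have hP' := (isUnit_iff_isUnit_det P).mp hP.isUnit
  have hQ' := (isUnit_iff_isUnit_det Q).mp hQ.isUnit
  have hsq : (P⁻¹ - Q⁻¹) * P * (P⁻¹ - Q⁻¹) = P⁻¹ - (Q⁻¹ + Q⁻¹ * (Q - P) * Q⁻¹) := by
    simp only [sub_mul, mul_sub, nonsing_inv_mul _ hP', nonsing_inv_mul _ hQ', mul_assoc,
      mul_nonsing_inv _ hP', one_mul, mul_one]
    abel
  rw [← sub_nonneg, ← hsq]
  exact (hP.inv.isHermitian.sub hQ.inv.isHermitian).isSelfAdjoint.conjugate_nonneg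
    hP.posSemidef.nonneg

lemma inv_le_inv_of_posDef_of_le_s7 (hP : P.PosDef) (h : P ≤ Q) : Q⁻¹ ≤ P⁻¹ := by
  have hQ := posDef_of_posDef_le hP h
  calc Q⁻¹ ≤ Q⁻¹ + Q⁻¹ * (Q - P) * Q⁻¹ := le_add_of_nonneg_right <|
        conjugate_nonneg_of_nonneg (sub_nonneg.mpr h) hQ.inv.posSemidef.nonneg
    _ ≤ P⁻¹ := inv_add_inv_mul_sub_mul_inv_le hP hQ

lemma inv_sub_eq_add_mul_inv_sub_mul {R : Type*} [CommRing R] {A M : Matrix m m R}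
    (hM : IsUnit M) (hMA : IsUnit (M - A)) :
    (M - A)⁻¹ = M⁻¹ + M⁻¹ * A * M⁻¹ + M⁻¹ * (A * (M - A)⁻¹ * A) * M⁻¹ := by
  have hunit : IsUnit (M - A) ↔ IsUnit M := iff_of_true hMA hM
  have hright : (M - A)⁻¹ = (M - A)⁻¹ * A * M⁻¹ + M⁻¹ := by
    rw [← sub_eq_iff_eq_add, inv_sub_inv hunit, sub_sub_cancel]
  have hleft : (M - A)⁻¹ = M⁻¹ + M⁻¹ * A * (M - A)⁻¹ := by
    rw [← sub_eq_iff_eq_add', ← neg_sub, inv_sub_inv hunit.symm, sub_sub_cancel_left]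
    simp only [mul_neg, neg_mul, neg_neg]
  calc (M - A)⁻¹ = M⁻¹ + M⁻¹ * A * ((M - A)⁻¹ * A * M⁻¹ + M⁻¹) := by rw [← hright, ← hleft]
    _ = M⁻¹ + M⁻¹ * A * M⁻¹ + M⁻¹ * (A * (M - A)⁻¹ * A) * M⁻¹ := by noncomm_ring

lemma inv_smul_eq_inv_smul_inv {K R : Type*} [Field K] [CommRing R] [Algebra K R]
    {c : K} {M : Matrix m m R} (hc : c ≠ 0) (hM : IsUnit M) : (c • M)⁻¹ = c⁻¹ • M⁻¹ := by
  refine inv_eq_right_inv ?_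
  rw [smul_mul_smul_comm, mul_inv_cancel₀ hc, one_smul,
    mul_nonsing_inv _ ((isUnit_iff_isUnit_det M).mp hM)]

lemma one_sub_re_trace_smul_le_sub (hM : M.PosDef) (hA : 0 ≤ A) :
    (1 - re (M⁻¹ * A).trace) • M ≤ M - A := by
  have hM' := (isUnit_iff_isUnit_det M).mp hM.isUnit
  have h := hM.isHermitian.isSelfAdjoint.conjugate_le_conjugate
    (mul_mul_self_le_re_trace_smul hM.inv.posSemidef.nonneg hA)
  rw [trace_mul_comm] at h
  simp only [mul_smul_comm, smul_mul_assoc, mul_nonsing_inv _ hM', ← mul_assoc, one_mul] at h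
  rw [mul_assoc, nonsing_inv_mul _ hM', mul_one] at h
  rw [sub_smul, one_smul]
  exact sub_le_sub_left h M

lemma posDef_sub_of_re_trace_lt_one (hM : M.PosDef) (hA : 0 ≤ A)
    (h : re (M⁻¹ * A).trace < 1) : (M - A).PosDef :=
  posDef_of_posDef_le (hM.smul (sub_pos.mpr h)) (one_sub_re_trace_smul_le_sub hM hA)

/-- When `A` has rank one this is an equality, the Sherman–Morrison formula. -/
lemma inv_sub_le_of_re_trace_lt_one (hM : M.PosDef) (hA : 0 ≤ A)
    (h : re (M⁻¹ * A).trace < 1) :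
    (M - A)⁻¹ ≤ M⁻¹ + (1 - re (M⁻¹ * A).trace)⁻¹ • (M⁻¹ * A * M⁻¹) := by
  set p := re (M⁻¹ * A).trace
  set s := (1 - p)⁻¹ with hs
  have hN := posDef_sub_of_re_trace_lt_one hM hA h
  have hp : 0 < 1 - p := sub_pos.mpr h
  have hs' : s = 1 + s * p := by rw [hs]; field_simp; ring
  have hinv : (M - A)⁻¹ ≤ s • M⁻¹ := by
    rw [hs, ← inv_smul_eq_inv_smul_inv hp.ne' hM.isUnit]
    exact inv_le_inv_of_posDef_of_le_s7 (hM.smul hp) (one_sub_re_trace_smul_le_sub hM hA)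
  have hAMA : A * (M - A)⁻¹ * A ≤ (s * p) • A :=
    calc A * (M - A)⁻¹ * A ≤ A * (s • M⁻¹) * A := conjugate_le_conjugate_of_nonneg hinv hA
      _ = s • (A * M⁻¹ * A) := by rw [mul_smul_comm, smul_mul_assoc]
      _ ≤ s • (p • A) := smul_le_smul_of_nonneg_left
        (mul_mul_self_le_re_trace_smul hA hM.inv.posSemidef.nonneg) (inv_nonneg.mpr hp.le)
      _ = (s * p) • A := smul_smul s p A
  calc (M - A)⁻¹ = M⁻¹ + M⁻¹ * A * M⁻¹ + M⁻¹ * (A * (M - A)⁻¹ * A) * M⁻¹ :=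
        inv_sub_eq_add_mul_inv_sub_mul hM.isUnit hN.isUnit
    _ ≤ M⁻¹ + M⁻¹ * A * M⁻¹ + M⁻¹ * ((s * p) • A) * M⁻¹ := by
      gcongr
      exact conjugate_le_conjugate_of_nonneg hAMA hM.inv.posSemidef.nonneg
    _ = M⁻¹ + s • (M⁻¹ * A * M⁻¹) := by
      rw [mul_smul_comm, smul_mul_assoc, hs', add_smul, one_smul, add_assoc, ← hs']

end Inverse

section Barrier

open RCLike Matrix Finset
open scoped ComplexOrder MatrixOrder

variable {𝕜 m ι : Type*} [RCLike 𝕜] [Fintype m] [DecidableEq m]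

/-- The barrier potential `tr (M⁻¹ X)`. In the selection argument `X` is the sum of all the given
matrices and `M` is the gap between the moving barrier and the sum of those selected so far; the
potential blows up when the barrier is about to be touched. The trace is real for positive `M`
and `X`, and is recorded as a real number. -/
noncomputable def barrierPotential (M X : Matrix m m 𝕜) : ℝ := re (M⁻¹ * X).trace

lemma barrierPotential_sum (M : Matrix m m 𝕜) (A : ι → Matrix m m 𝕜) (s : Finset ι) :
    barrierPotential M (∑ i ∈ s, A i) = ∑ i ∈ s, barrierPotential M (A i) := by
  simp only [barrierPotential, mul_sum, trace_sum, map_sum]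

lemma barrierPotential_nonneg {M X : Matrix m m 𝕜} (hM : M.PosDef) (hX : 0 ≤ X) :
    0 ≤ barrierPotential M X :=
  re_trace_mul_nonneg hM.inv.posSemidef.nonneg hX

lemma barrierPotential_smul_one {α : ℝ} (hα : α ≠ 0) (X : Matrix m m 𝕜) :
    barrierPotential (α • 1) X = re X.trace / α := by
  rw [barrierPotential, inv_smul_eq_inv_smul_inv hα isUnit_one, inv_one, smul_one_mul, trace_smul,
    smul_re, inv_mul_eq_div]

lemma barrierPotential_add_smul_le {M X : Matrix m m 𝕜} {δ : ℝ} (hM : M.PosDef) (hX : 0 ≤ X)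
    (hδ : 0 ≤ δ) :
    barrierPotential (M + δ • X) X + δ * re ((M + δ • X)⁻¹ * X * (M + δ • X)⁻¹ * X).trace
      ≤ barrierPotential M X := by
  have h := re_trace_mul_le_re_trace_mul (inv_add_inv_mul_sub_mul_inv_le hM
    (hM.add_posSemidef (hX.posSemidef.smul hδ))) hX
  simpa only [barrierPotential, add_sub_cancel_left, mul_smul_comm, smul_mul_assoc, add_mul,
    trace_add, trace_smul, map_add, smul_re] using h

lemma barrierPotential_sub_le {M X A : Matrix m m 𝕜} (hM : M.PosDef) (hX : 0 ≤ X) (hA : 0 ≤ A)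
    (h : barrierPotential M A < 1) :
    barrierPotential (M - A) X ≤
      barrierPotential M X + (1 - barrierPotential M A)⁻¹ * re (M⁻¹ * X * M⁻¹ * A).trace := by
  have hcycle : (M⁻¹ * A * M⁻¹ * X).trace = (M⁻¹ * X * M⁻¹ * A).trace := by
    rw [mul_assoc, trace_mul_comm, ← mul_assoc]
  have hle := re_trace_mul_le_re_trace_mul (inv_sub_le_of_re_trace_lt_one hM hA h) hX
  simpa only [barrierPotential, add_mul, smul_mul_assoc, trace_add, trace_smul, map_add, smul_re,
    hcycle] using hle

lemma exists_le_one_sub_mul_of_add_le_card [Fintype ι] {p q : ι → ℝ} {δ φ : ℝ} {R : Finset ι}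
    (hp : ∀ i, 0 ≤ p i) (hq : ∀ i, 0 ≤ q i) (hδ : 0 < δ)
    (hφ : ∑ i, p i + δ * ∑ i, q i ≤ φ) (hR : δ⁻¹ + φ ≤ #R) :
    ∃ i ∈ R, p i < 1 ∧ q i ≤ (1 - p i) * (δ * ∑ i, q i) := by
  set τ := ∑ i, q i
  have hτ : 0 ≤ τ := sum_nonneg fun i _ ↦ hq i
  have hpR : ∑ i ∈ R, p i ≤ φ :=
    (sum_le_univ_sum_of_nonneg hp).trans <| (le_add_of_nonneg_right (by positivity)).trans hφ
  have hqR : ∑ i ∈ R, q i ≤ τ := sum_le_univ_sum_of_nonneg hq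
  by_contra! hlarge
  -- This index makes the averaged inequality strict even when `τ = 0`.
  obtain ⟨k, hkR, hpk⟩ : ∃ k ∈ R, p k < 1 := by
    refine exists_lt_of_sum_lt (lt_of_le_of_lt hpR ?_)
    have := inv_pos.mpr hδ
    simp only [sum_const, nsmul_eq_mul, mul_one]
    linarith
  have hsum : ∑ i ∈ R, (1 - p i) * (δ * τ) < ∑ i ∈ R, q i := by
    refine sum_lt_sum (fun i hi ↦ ?_) ⟨k, hkR, hlarge k hkR hpk⟩
    rcases lt_or_ge (p i) 1 with hpi | hpi
    · exact (hlarge i hi hpi).le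
    · exact (mul_nonpos_of_nonpos_of_nonneg (sub_nonpos.mpr hpi) (by positivity)).trans (hq i)
  have hcount : δ⁻¹ ≤ ∑ i ∈ R, (1 - p i) := by
    simp only [sum_sub_distrib, sum_const, nsmul_eq_mul, mul_one]
    linarith
  refine hsum.not_ge ?_
  calc ∑ i ∈ R, q i ≤ δ⁻¹ * (δ * τ) := by rwa [inv_mul_cancel_left₀ hδ.ne']
    _ ≤ (∑ i ∈ R, (1 - p i)) * (δ * τ) := by gcongr
    _ = ∑ i ∈ R, (1 - p i) * (δ * τ) := sum_mul _ _ _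

variable [Fintype ι] {A : ι → Matrix m m 𝕜} {M : Matrix m m 𝕜}

lemma exists_barrierPotential_shift_sub_le {δ : ℝ} {R : Finset ι} (hA : ∀ i, 0 ≤ A i)
    (hM : M.PosDef) (hδ : 0 < δ) (hR : δ⁻¹ + barrierPotential M (∑ i, A i) ≤ #R) :
    ∃ i ∈ R, (M + δ • ∑ i, A i - A i).PosDef ∧
      barrierPotential (M + δ • ∑ i, A i - A i) (∑ i, A i) ≤ barrierPotential M (∑ i, A i) := by
  set X := ∑ i, A i with hXdef
  have hX : 0 ≤ X := sum_nonneg fun i _ ↦ hA i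
  set N := M + δ • X
  have hN : N.PosDef := hM.add_posSemidef (hX.posSemidef.smul hδ.le)
  set q : ι → ℝ := fun i ↦ re (N⁻¹ * X * N⁻¹ * A i).trace
  have hq i : 0 ≤ q i :=
    re_trace_mul_nonneg (conjugate_nonneg_of_nonneg hX hN.inv.posSemidef.nonneg) (hA i)
  have hsum_q : ∑ i, q i = re (N⁻¹ * X * N⁻¹ * X).trace := by
    simp only [q, hXdef, mul_sum, trace_sum, map_sum]
  have hshift : ∑ i, barrierPotential N (A i) + δ * ∑ i, q i ≤ barrierPotential M X := by
    rw [← barrierPotential_sum, hsum_q]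
    exact barrierPotential_add_smul_le hM hX hδ.le
  obtain ⟨i, hiR, hpi, hqi⟩ := exists_le_one_sub_mul_of_add_le_card
    (fun i ↦ barrierPotential_nonneg hN (hA i)) hq hδ hshift hR
  refine ⟨i, hiR, posDef_sub_of_re_trace_lt_one hN (hA i) hpi, ?_⟩
  calc barrierPotential (N - A i) X
      ≤ barrierPotential N X + (1 - barrierPotential N (A i))⁻¹ * q i :=
        barrierPotential_sub_le hN hX (hA i) hpi
    _ ≤ barrierPotential N X + δ * ∑ i, q i :=
        add_le_add_right ((inv_mul_le_iff₀ (sub_pos.mpr hpi)).mpr hqi) _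
    _ ≤ barrierPotential M X := by rwa [hXdef, barrierPotential_sum, ← hXdef]

/-- After `k` selections from `n = card ι` indices, `n - k` of them remain while the potential is
still at most `n - c`, so `(c - k)⁻¹` is the smallest shift for which another selection is
guaranteed. -/
lemma exists_card_eq_barrierPotential_le (hA : ∀ i, 0 ≤ A i) (hM : M.PosDef) {c : ℝ}
    (hc : c + barrierPotential M (∑ i, A i) = Fintype.card ι) {t : ℕ} (ht : t ≤ c) :
    ∃ T : Finset ι, #T = t ∧
      (M + (∑ k ∈ range t, (c - k)⁻¹) • ∑ i, A i - ∑ i ∈ T, A i).PosDef ∧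
      barrierPotential (M + (∑ k ∈ range t, (c - k)⁻¹) • ∑ i, A i - ∑ i ∈ T, A i) (∑ i, A i)
        ≤ barrierPotential M (∑ i, A i) := by
  classical
  induction t with
  | zero => exact ⟨∅, by simpa using hM⟩
  | succ t ih =>
    push_cast at ht
    obtain ⟨T, rfl, hpos, hpot⟩ := ih (by linarith)
    have hcompl : (c - #T)⁻¹⁻¹ + barrierPotential
        (M + (∑ k ∈ range #T, (c - k)⁻¹) • ∑ i, A i - ∑ i ∈ T, A i) (∑ i, A i) ≤ #Tᶜ := by
      rw [inv_inv, card_compl, Nat.cast_sub T.card_le_univ, ← hc]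
      linarith
    obtain ⟨i, hi, hpos', hpot'⟩ :=
      exists_barrierPotential_shift_sub_le hA hpos (inv_pos.mpr (by linarith)) hcompl
    have hiT : i ∉ T := mem_compl.mp hi
    have hstep : M + (∑ k ∈ range (#T + 1), (c - k)⁻¹) • ∑ i, A i - ∑ i ∈ insert i T, A i =
        M + (∑ k ∈ range #T, (c - k)⁻¹) • ∑ i, A i - ∑ i ∈ T, A i
          + (c - #T)⁻¹ • ∑ i, A i - A i := by
      rw [sum_range_succ, sum_insert hiT]
      module
    exact ⟨insert i T, card_insert_of_notMem hiT, hstep ▸ hpos', hstep ▸ hpot'.trans hpot⟩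

lemma sum_range_inv_sub_le_log {c : ℝ} {t : ℕ} (ht : t < c) :
    ∑ k ∈ range t, (c - k)⁻¹ ≤ Real.log (c / (c - t)) := by
  induction t with
  | zero =>
    have hc : c ≠ 0 := by simpa using ht.ne'
    simp [hc]
  | succ t ih =>
    push_cast at ht ⊢
    have hct : 0 < c - (t + 1) := sub_pos.mpr ht
    have hct' : 0 < c - t := by linarith
    have hc : 0 < c := by linarith [t.cast_nonneg (α := ℝ)]
    have hlog : (c - t)⁻¹ ≤ Real.log ((c - t) / (c - (t + 1))) := by
      refine le_of_eq_of_le ?_ (Real.one_sub_inv_le_log_of_pos (div_pos hct' hct))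
      field_simp
      ring
    calc ∑ k ∈ range (t + 1), (c - k)⁻¹
        ≤ Real.log (c / (c - t)) + Real.log ((c - t) / (c - (t + 1))) := by
          rw [sum_range_succ]
          exact add_le_add (ih (by linarith)) hlog
      _ = Real.log (c / (c - (t + 1))) := by
          rw [← Real.log_mul (by positivity) (by positivity), div_mul_div_cancel₀ hct'.ne']

lemma exists_card_eq_sum_le_log_smul (hA : ∀ i, 0 ≤ A i) {α c : ℝ} (hα : 0 < α)
    (hc : c + re (∑ i, A i).trace / α = Fintype.card ι) {t : ℕ} (ht : t < c) :
    ∃ T : Finset ι, #T = t ∧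
      ∑ i ∈ T, A i ≤ α • (1 : Matrix m m 𝕜) + Real.log (c / (c - t)) • ∑ i, A i := by
  rw [← barrierPotential_smul_one hα.ne'] at hc
  obtain ⟨T, hT, hpos, -⟩ := exists_card_eq_barrierPotential_le hA (PosDef.one.smul hα) hc ht.le
  refine ⟨T, hT, (le_iff.mpr hpos.posSemidef).trans ?_⟩
  gcongr
  · exact sum_nonneg fun i _ ↦ hA i
  · exact sum_range_inv_sub_le_log ht

end Barrier

section DataSplitting

open RCLike Matrix Finset
open scoped ComplexOrder MatrixOrder

variable {𝕜 m ι : Type*} [RCLike 𝕜] [Fintype m] [DecidableEq m] [Fintype ι]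

lemma log_div_sub_le_eight_ninths {c t : ℝ} (hc : 0 < c) (ht : 9 * t ≤ 5 * c) :
    Real.log (c / (c - t)) ≤ 8 / 9 := by
  have hct : 0 < c - t := by linarith
  have hexp : (9 / 4 : ℝ) ≤ Real.exp (8 / 9) :=
    le_trans (by norm_num) (Real.quadratic_le_exp_of_nonneg (by norm_num : (0 : ℝ) ≤ 8 / 9))
  rw [Real.log_le_iff_le_exp (div_pos hc hct)]
  refine le_trans ?_ hexp
  rw [div_le_iff₀ hct]
  linarith

lemma exists_half_card_sum_le_smul_add_smul {A : ι → Matrix m m 𝕜} (hA : ∀ i, 0 ≤ A i)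
    (htr : ∀ i, re (A i).trace ≤ 1) :
    ∃ T : Finset ι, Fintype.card ι ≤ 2 * #T ∧
      ∑ i ∈ T, A i ≤ (16 : ℝ) • (1 : Matrix m m 𝕜) + (8 / 9 : ℝ) • ∑ i, A i := by
  set n := Fintype.card ι
  have hX : 0 ≤ ∑ i, A i := sum_nonneg fun i _ ↦ hA i
  have htrX : re (∑ i, A i).trace ≤ n := by
    rw [trace_sum, map_sum]
    simpa only [nsmul_eq_mul, mul_one, card_univ] using sum_le_card_nsmul univ _ 1 fun i _ ↦ htr i
  rcases le_or_gt n 144 with hn | hn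
  -- `X ≤ n • 1`, so for `n ≤ 144 = 9 * 16` every index may be selected.
  · have hn' : (n : ℝ) ≤ 144 := by exact_mod_cast hn
    have hX144 : ∑ i, A i ≤ (144 : ℝ) • (1 : Matrix m m 𝕜) := by
      refine (le_re_trace_smul_one hX).trans ?_
      exact smul_le_smul_of_nonneg_right (htrX.trans hn') PosSemidef.one.nonneg
    refine ⟨univ, Nat.le_mul_of_pos_left n two_pos, ?_⟩
    calc ∑ i, A i = (1 / 9 : ℝ) • ∑ i, A i + (8 / 9 : ℝ) • ∑ i, A i := by module
      _ ≤ (1 / 9 : ℝ) • (144 : ℝ) • (1 : Matrix m m 𝕜) + (8 / 9 : ℝ) • ∑ i, A i := by gcongr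
      _ = (16 : ℝ) • (1 : Matrix m m 𝕜) + (8 / 9 : ℝ) • ∑ i, A i := by module
  · have hn' : (144 : ℝ) < n := by exact_mod_cast hn
    have ht : (((n + 1) / 2 : ℕ) : ℝ) ≤ (n + 1) / 2 := by exact_mod_cast Nat.cast_div_le
    obtain ⟨T, hT, hle⟩ := exists_card_eq_sum_le_log_smul (t := (n + 1) / 2) hA
      (by norm_num : (0 : ℝ) < 16) (sub_add_cancel (n : ℝ) _) (by linarith)
    refine ⟨T, by omega, hle.trans ?_⟩
    gcongr
    exact log_div_sub_le_eight_ninths (by linarith) (by linarith)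

theorem kadison_singer_data_splitting_general {A : ι → Matrix m m 𝕜}
    (hA : ∀ i, (A i).PosSemidef) (htr : ∀ i, re (A i).trace ≤ 1) :
    ∃ S : Finset ι, 2 * #S ≤ Fintype.card ι ∧
      (((18 : ℝ) • (1 : Matrix m m 𝕜) + ∑ i ∈ S, A i)
        - (1 / 9 : ℝ) • ((18 : ℝ) • (1 : Matrix m m 𝕜) + ∑ i, A i)).PosSemidef := by
  classical
  obtain ⟨T, hcard, hle⟩ := exists_half_card_sum_le_smul_add_smul (fun i ↦ (hA i).nonneg) htr
  refine ⟨Tᶜ, by rw [card_compl]; omega, ?_⟩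
  convert le_iff.mp hle using 1
  rw [← sum_add_sum_compl T A]
  module

end DataSplitting

open Matrix in
/-- **Kadison–Singer data-splitting lemma.** Given `x₁,…,xₙ ∈ ℝ^d` with `‖xᵢ‖₂ ≤ 1` and
`Σ = 18·I + ∑ᵢ xᵢxᵢᵀ`, there is a subset `S ⊆ [n]` with `|S| ≤ n/2` such that
`18·I + ∑_{i∈S} xᵢxᵢᵀ ⪰ Σ/9` in the Loewner order. -/
theorem kadison_singer_data_splitting
    (d n : ℕ) (x : Fin n → Fin d → ℝ)
    (hx : ∀ i, Real.sqrt (∑ j, x i j ^ 2) ≤ 1) :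
    ∃ S : Finset (Fin n), 2 * S.card ≤ n ∧
      (((18 : ℝ) • (1 : Matrix (Fin d) (Fin d) ℝ) + ∑ i ∈ S, vecMulVec (x i) (x i))
        - (1 / 9 : ℝ) •
          ((18 : ℝ) • (1 : Matrix (Fin d) (Fin d) ℝ) +
            ∑ i : Fin n, vecMulVec (x i) (x i))).PosSemidef := by
  have hpos i : (vecMulVec (x i) (x i)).PosSemidef := by
    simpa only [star_trivial] using posSemidef_vecMulVec_self_star (x i)
  have htr i : (vecMulVec (x i) (x i)).trace ≤ 1 := by
    simpa only [trace_vecMulVec, dotProduct, ← sq, Real.sqrt_le_one] using hx i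
  obtain ⟨S, hcard, hS⟩ := kadison_singer_data_splitting_general hpos htr
  exact ⟨S, by simpa only [Fintype.card_fin] using hcard, hS⟩
end

section
/- Let G : [0,1] → [0,1] be nondecreasing and let v₀ ≤ v₁ be real numbers. Suppose the set of maximizers of b ↦ G(b)(v₀ − b) over [0,1] and the set of maximizers of b ↦ G(b)(v₁ − b) over [0,1] are both nonempty, and let b₀ and b₁ respectively be the greatest elements of these two sets of maximizers. Then b₀ ≤ b₁. The same conclusion b₀ ≤ b₁ holds if instead b₀ and b₁ are the least elements of the respective sets of maximizers. -/
/-!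
Raising the value from `v₀` to `v₁` raises the payoff of the bid `b` by `G b * (v₁ - v₀)`, which is
nondecreasing in `b`: the payoff has increasing differences in the bid and the value. If an optimal
bid for `v₁` were below an optimal bid for `v₀`, then exchanging the two would yield optimal bids
again, so the greatest and the least optimal bids can only move up with the value.
-/

section MaximizersOn

variable {α β : Type*}

/-- The set of maximizers of `f` over `s`, such as the optimal bids in `s` for a payoff `f`.
Membership in `s` is required separately, since `IsMaxOn f s a` allows `a ∉ s`. -/
def maximizersOn [Preorder β] (f : α → β) (s : Set α) : Set α :=
  {a | a ∈ s ∧ IsMaxOn f s a}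

theorem mem_maximizersOn_of_le [Preorder β] {f : α → β} {s : Set α} {a b : α}
    (ha : a ∈ maximizersOn f s) (hb : b ∈ s) (hab : f a ≤ f b) : b ∈ maximizersOn f s :=
  ⟨hb, fun _ hx => (ha.2 hx).trans hab⟩

variable [AddCommGroup β] [Preorder β] [IsOrderedAddMonoid β] {f g : α → β} {s : Set α} {a b : α}

theorem maximizersOn_exchange [Preorder α] (hfg : MonotoneOn (g - f) s)
    (ha : a ∈ maximizersOn f s) (hb : b ∈ maximizersOn g s) (hba : b ≤ a) :
    a ∈ maximizersOn g s ∧ b ∈ maximizersOn f s := by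
  have hdiff : g b - f b ≤ g a - f a := hfg hb.1 ha.1 hba
  have hf : f b ≤ f a := ha.2 hb.1
  have hg : g a ≤ g b := hb.2 ha.1
  constructor
  · refine mem_maximizersOn_of_le hb ha.1 ?_
    simpa only [sub_add_cancel] using add_le_add hdiff hf
  · refine mem_maximizersOn_of_le ha hb.1 ?_
    simpa only [sub_sub_cancel] using sub_le_sub hg hdiff

variable [LinearOrder α]

theorem le_of_isGreatest_maximizersOn (hfg : MonotoneOn (g - f) s)
    (ha : a ∈ maximizersOn f s) (hb : IsGreatest (maximizersOn g s) b) : a ≤ b :=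
  (le_total a b).elim id fun hba => hb.2 (maximizersOn_exchange hfg ha hb.1 hba).1

theorem le_of_isLeast_maximizersOn (hfg : MonotoneOn (g - f) s)
    (ha : IsLeast (maximizersOn f s) a) (hb : b ∈ maximizersOn g s) : a ≤ b :=
  (le_total a b).elim id fun hba => ha.2 (maximizersOn_exchange hfg ha.1 hb hba).2

end MaximizersOn

section Payoff

variable {α R : Type*} [Ring R] {G p : α → R} {s : Set α} {v₀ v₁ : R}

theorem monotoneOn_payoff_sub_payoff [Preorder α] [PartialOrder R] [IsOrderedRing R]
    (hG : MonotoneOn G s) (hv : v₀ ≤ v₁) :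
    MonotoneOn ((fun b => G b * (v₁ - p b)) - fun b => G b * (v₀ - p b)) s := by
  have hdiff : ((fun b => G b * (v₁ - p b)) - fun b => G b * (v₀ - p b)) =
      fun b => G b * (v₁ - v₀) := by
    funext b
    simp only [Pi.sub_apply, ← mul_sub, sub_sub_sub_cancel_right]
  rw [hdiff]
  exact fun a ha b hb hab => mul_le_mul_of_nonneg_right (hG ha hb hab) (sub_nonneg.2 hv)

/-- `p b` is the price paid on winning with the bid `b`; in a first-price auction it is `b`. -/
theorem monotone_optimal_bid_general [LinearOrder α] [PartialOrder R] [IsOrderedRing R]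
    (hG : MonotoneOn G s) (hv : v₀ ≤ v₁) {b₀ b₁ : α}
    (h : (IsGreatest (maximizersOn (fun b => G b * (v₀ - p b)) s) b₀ ∧
          IsGreatest (maximizersOn (fun b => G b * (v₁ - p b)) s) b₁) ∨
         (IsLeast (maximizersOn (fun b => G b * (v₀ - p b)) s) b₀ ∧
          IsLeast (maximizersOn (fun b => G b * (v₁ - p b)) s) b₁)) :
    b₀ ≤ b₁ := by
  have hdiff := monotoneOn_payoff_sub_payoff (p := p) hG hv
  rcases h with ⟨h₀, h₁⟩ | ⟨h₀, h₁⟩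
  · exact le_of_isGreatest_maximizersOn hdiff h₀.1 h₁
  · exact le_of_isLeast_maximizersOn hdiff h₀ h₁.1

end Payoff

/-- **Monotonicity of the optimal bid in the value.** Let `G : [0,1] → [0,1]` be
nondecreasing and `v₀ ≤ v₁`. If `b₀` and `b₁` are the greatest (respectively, the least)
maximizers over `[0,1]` of `b ↦ G(b)(v₀ − b)` and `b ↦ G(b)(v₁ − b)`, then `b₀ ≤ b₁`. -/
theorem monotone_optimal_bid
    (G : ℝ → ℝ)
    (hmono : MonotoneOn G (Set.Icc (0 : ℝ) 1))
    (hmaps : ∀ x ∈ Set.Icc (0 : ℝ) 1, G x ∈ Set.Icc (0 : ℝ) 1)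
    (v0 v1 : ℝ) (hv : v0 ≤ v1)
    (b0 b1 : ℝ)
    (h : (IsGreatest {b | b ∈ Set.Icc (0 : ℝ) 1 ∧
            ∀ b' ∈ Set.Icc (0 : ℝ) 1, G b' * (v0 - b') ≤ G b * (v0 - b)} b0 ∧
          IsGreatest {b | b ∈ Set.Icc (0 : ℝ) 1 ∧
            ∀ b' ∈ Set.Icc (0 : ℝ) 1, G b' * (v1 - b') ≤ G b * (v1 - b)} b1) ∨
         (IsLeast {b | b ∈ Set.Icc (0 : ℝ) 1 ∧
            ∀ b' ∈ Set.Icc (0 : ℝ) 1, G b' * (v0 - b') ≤ G b * (v0 - b)} b0 ∧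
          IsLeast {b | b ∈ Set.Icc (0 : ℝ) 1 ∧
            ∀ b' ∈ Set.Icc (0 : ℝ) 1, G b' * (v1 - b') ≤ G b * (v1 - b)} b1)) :
    b0 ≤ b1 := by
  exact monotone_optimal_bid_general (p := id) hmono hv h
end

section
/- Let L ≥ 1, let G : [0,1] → [0,1] be a nondecreasing L-Lipschitz function, and let Ĝ : [0,1] → [0,1] be a nondecreasing right-continuous function with sup_{x∈[0,1]} |G(x) − Ĝ(x)| ≤ 0.1. Let 0 ≤ v₁ ≤ v₂ ≤ 1 with v₂ − v₁ ≤ 1/(20L), and suppose b₁ and b₂ are the greatest maximizers of b ↦ Ĝ(b)(v₁ − b) and b ↦ Ĝ(b)(v₂ − b) over [0,1], respectively (the maxima being attained). Then Ĝ(b₂) − Ĝ(b₁) ≤ 1 − 1/(20L). -/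
/-!
Let `δ` bound `v₂ - v₁`, and suppose `Ĝ b₂ - Ĝ b₁ > 1 - δ`, so that `Ĝ b₁ < δ` and `Ĝ b₂ > 1 - δ`.
Since raising the bid above the value to win more often never pays, `b₂ ≤ v₂ ≤ v₁ + δ`. A bidder
with value `v₁` could therefore bid `b₂ - 5δ`, leaving a margin of at least `4δ`; as `Ĝ` is
Lipschitz up to a bounded error, this bid still wins with probability more than `1/4` for small `δ`.
Its payoff exceeds `δ`, whereas `b₁` earns at most `Ĝ b₁ < δ`.
-/

open Set

/-- The function `f` is coarsely Lipschitz on `s`: it is `L`-Lipschitz up to an additive error `η`.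
This is the regularity that survives when a Lipschitz function is replaced by a uniform
approximation. -/
def CoarseLipschitzOn {α β : Type*} [PseudoMetricSpace α] [PseudoMetricSpace β]
    (L η : ℝ) (f : α → β) (s : Set α) : Prop :=
  ∀ x ∈ s, ∀ y ∈ s, dist (f x) (f y) ≤ L * dist x y + η

theorem CoarseLipschitzOn.of_dist_le {α β : Type*} [PseudoMetricSpace α] [PseudoMetricSpace β]
    {L η ε : ℝ} {f g : α → β} {s : Set α} (hf : CoarseLipschitzOn L η f s)
    (hfg : ∀ x ∈ s, dist (f x) (g x) ≤ ε) : CoarseLipschitzOn L (η + 2 * ε) g s := by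
  intro x hx y hy
  calc dist (g x) (g y)
      ≤ dist (g x) (f x) + dist (f x) (f y) + dist (f y) (g y) := dist_triangle4 ..
    _ ≤ ε + (L * dist x y + η) + ε := by
        gcongr
        · exact dist_comm (g x) (f x) ▸ hfg x hx
        · exact hf x hx y hy
        · exact hfg y hy
    _ = L * dist x y + (η + 2 * ε) := by ring

theorem CoarseLipschitzOn.sub_le {α : Type*} [PseudoMetricSpace α] {L η h : ℝ} {f : α → ℝ}
    {s : Set α} {x y : α} (hf : CoarseLipschitzOn L η f s) (hL : 0 ≤ L) (hx : x ∈ s)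
    (hy : y ∈ s) (hxy : dist y x ≤ h) : f y - f x ≤ L * h + η :=
  calc f y - f x ≤ |f y - f x| := le_abs_self _
    _ ≤ L * dist y x + η := hf y hy x hx
    _ ≤ L * h + η := by gcongr

/-- The expected payoff, in a first-price auction, of bidding `b` with value `v` when a bid `b` wins
with probability `H b`. -/
def expectedPayoff (H : ℝ → ℝ) (v b : ℝ) : ℝ :=
  H b * (v - b)

theorem le_value_of_isMaxOn_expectedPayoff {H : ℝ → ℝ} {s : Set ℝ} {v a b : ℝ}
    (hb : IsMaxOn (expectedPayoff H v) s b) (ha : a ∈ s) (hab : a ≤ b)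
    (hHa : 0 ≤ H a) (hH : H a < H b) : b ≤ v := by
  have hopt : H a * (v - a) ≤ H b * (v - b) := hb ha
  have hdiff : 0 ≤ (H b - H a) * (v - b) :=
    calc 0 ≤ H a * (b - a) := mul_nonneg hHa (sub_nonneg.2 hab)
      _ ≤ (H b - H a) * (v - b) := by linarith
  exact sub_nonneg.1 (nonneg_of_mul_nonneg_right hdiff (sub_pos.2 hH))

theorem expectedPayoff_le_winProb {H : ℝ → ℝ} {v b : ℝ} (hH : 0 ≤ H b) (hvb : v - b ≤ 1) :
    expectedPayoff H v b ≤ H b :=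
  mul_le_of_le_one_right hH hvb

theorem mul_lt_expectedPayoff {H : ℝ → ℝ} {v b p m : ℝ} (hp : 0 ≤ p) (hH : p < H b)
    (hm : 0 < m) (hvb : m ≤ v - b) : p * m < expectedPayoff H v b :=
  mul_lt_mul hH hvb hm (hp.trans hH.le)

theorem approx_cdf_ucb_lipschitz_general {L η δ v₁ v₂ b₁ b₂ : ℝ} {H : ℝ → ℝ} (hL : 0 ≤ L)
    (hlip : CoarseLipschitzOn L η H (Icc 0 1)) (hmono : MonotoneOn H (Icc 0 1))
    (hmaps : MapsTo H (Icc 0 1) (Icc 0 1)) (hδ : (1 + 5 * L) * δ + η < 3 / 4)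
    (hv₁ : v₁ ≤ 1) (hv : v₂ - v₁ ≤ δ) (hb₁ : b₁ ∈ Icc 0 1) (hb₂ : b₂ ∈ Icc 0 1)
    (hmax₁ : IsMaxOn (expectedPayoff H v₁) (Icc 0 1) b₁)
    (hmax₂ : IsMaxOn (expectedPayoff H v₂) (Icc 0 1) b₂) :
    H b₂ - H b₁ ≤ 1 - δ := by
  by_contra! hjump
  have hH₁ : 0 ≤ H b₁ := (hmaps hb₁).1
  have hH₂ : H b₂ ≤ 1 := (hmaps hb₂).2
  have hδ_pos : 0 < δ := by linarith
  have hδ_lt : δ < 3 / 4 := by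
    have : H b₁ - H b₁ ≤ L * (5 * δ) + η :=
      hlip.sub_le hL hb₁ hb₁ ((dist_self _).trans_le (by positivity))
    linarith
  have hH_lt : H b₁ < H b₂ := by linarith
  have hb : b₁ ≤ b₂ := (hmono.reflect_lt hb₁ hb₂ hH_lt).le
  have hb₂_le : b₂ ≤ v₂ := le_value_of_isMaxOn_expectedPayoff hmax₂ hb₁ hb hH₁ hH_lt
  have hfar : 5 * δ < b₂ - b₁ := by
    by_contra! hnear
    have : H b₂ - H b₁ ≤ L * (5 * δ) + η :=
      hlip.sub_le hL hb₁ hb₂ ((abs_of_nonneg (sub_nonneg.2 hb)).trans_le hnear)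
    linarith
  have hshade : b₂ - 5 * δ ∈ Icc (0 : ℝ) 1 := ⟨by linarith [hb₁.1], by linarith [hb₂.2]⟩
  have hwin : 1 / 4 < H (b₂ - 5 * δ) := by
    have : H b₂ - H (b₂ - 5 * δ) ≤ L * (5 * δ) + η :=
      hlip.sub_le hL hshade hb₂ (by rw [Real.dist_eq, sub_sub_cancel, abs_of_pos (by positivity)])
    linarith
  have hpayoff : 1 / 4 * (4 * δ) < expectedPayoff H v₁ (b₂ - 5 * δ) :=
    mul_lt_expectedPayoff (by norm_num) hwin (by positivity) (by linarith)
  have hoptimal : expectedPayoff H v₁ (b₂ - 5 * δ) ≤ expectedPayoff H v₁ b₁ := hmax₁ hshade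
  have hle_win : expectedPayoff H v₁ b₁ ≤ H b₁ :=
    expectedPayoff_le_winProb hH₁ (by linarith [hb₁.1])
  linarith

/-- **Win probabilities of optimal bids for nearby values cannot span `[0,1]`.**
Let `L ≥ 1`, `G : [0,1] → [0,1]` nondecreasing and `L`-Lipschitz, `Ĝ : [0,1] → [0,1]`
nondecreasing, right-continuous, with `|G − Ĝ| ≤ 0.1` uniformly on `[0,1]`. If
`0 ≤ v₁ ≤ v₂ ≤ 1` with `v₂ − v₁ ≤ 1/(20L)` and `b₁, b₂` are the greatest maximizers of
`b ↦ Ĝ(b)(v₁ − b)` and `b ↦ Ĝ(b)(v₂ − b)` over `[0,1]`, then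
`Ĝ(b₂) − Ĝ(b₁) ≤ 1 − 1/(20L)`. -/
theorem approx_cdf_ucb_lipschitz
    (L : ℝ) (hL : 1 ≤ L)
    (G Ghat : ℝ → ℝ)
    (hGmono : MonotoneOn G (Set.Icc (0 : ℝ) 1))
    (hGmaps : ∀ x ∈ Set.Icc (0 : ℝ) 1, G x ∈ Set.Icc (0 : ℝ) 1)
    (hGlip : ∀ x ∈ Set.Icc (0 : ℝ) 1, ∀ y ∈ Set.Icc (0 : ℝ) 1, |G x - G y| ≤ L * |x - y|)
    (hHmono : MonotoneOn Ghat (Set.Icc (0 : ℝ) 1))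
    (hHmaps : ∀ x ∈ Set.Icc (0 : ℝ) 1, Ghat x ∈ Set.Icc (0 : ℝ) 1)
    (hHrc : ∀ x ∈ Set.Ico (0 : ℝ) 1, ContinuousWithinAt Ghat (Set.Ici x) x)
    (hclose : ∀ x ∈ Set.Icc (0 : ℝ) 1, |G x - Ghat x| ≤ 0.1)
    (v1 v2 : ℝ) (hv1 : 0 ≤ v1) (hv12 : v1 ≤ v2) (hv2 : v2 ≤ 1)
    (hgap : v2 - v1 ≤ 1 / (20 * L))
    (b1 b2 : ℝ)
    (hb1 : IsGreatest {b | b ∈ Set.Icc (0 : ℝ) 1 ∧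
      ∀ b' ∈ Set.Icc (0 : ℝ) 1, Ghat b' * (v1 - b') ≤ Ghat b * (v1 - b)} b1)
    (hb2 : IsGreatest {b | b ∈ Set.Icc (0 : ℝ) 1 ∧
      ∀ b' ∈ Set.Icc (0 : ℝ) 1, Ghat b' * (v2 - b') ≤ Ghat b * (v2 - b)} b2) :
    Ghat b2 - Ghat b1 ≤ 1 - 1 / (20 * L) := by
  have hcoarse : CoarseLipschitzOn L 0 G (Icc 0 1) := fun x hx y hy ↦
    (hGlip x hx y hy).trans_eq (add_zero _).symm
  have hδ : (1 + 5 * L) * (1 / (20 * L)) + (0 + 2 * 0.1) < 3 / 4 := by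
    field_simp
    linarith
  exact approx_cdf_ucb_lipschitz_general (by linarith) (hcoarse.of_dist_le hclose) hHmono hHmaps
    hδ (hv12.trans hv2) hgap hb1.1.1 hb2.1.1 hb1.1.2 hb2.1.2
end

section
/- Let M be a real-valued random variable with cumulative distribution function G(x) = P(M ≤ x), and let v₁, v₀ be random variables taking values in [0,1] such that the pair (v₁, v₀) is independent of M. Fix b ∈ ℝ, δ ∈ (0,1), and ĝ ∈ (0,1) with |ĝ − G(b)| ≤ δ·√(G(b)(1−G(b))) + δ². Define the truncated inverse-propensity-weighted estimator ẽ = 1[M ≤ b]·v₁ / max{δ², ĝ} − 1[M > b]·v₀ / max{δ², 1−ĝ}, and set σ = 1/√(ĝ(1−ĝ)). Then |E[ẽ] − E[v₁ − v₀]| ≤ 20√6 · δ · σ. -/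
/-! Each arm of the estimator has mean `E[v] · (G / max(δ², ĝ))`, so the bias is governed by how far
the propensity ratio is from `1`. Put `t = √max(δ², ĝ)`, so `δ ≤ t`. Truncating moves `ĝ` by no more
than the estimation error already allows, hence `|G - t²| ≤ δ√G + δ²`. This forces `√G ≤ 2t`, so
`|G - t²| ≤ 3δt`, and the ratio is within `3δ/t` of `1`. The other arm is the same statement for
`1 - ĝ` and `1 - G`, since the variance `G(1 - G)` is symmetric. -/

section OrderedField

variable {K : Type*} [Field K] [LinearOrder K] [IsStrictOrderedRing K]

lemma abs_sub_max_le_of_abs_sub_le {a b c r : K} (hab : |b - a| ≤ r) (hc : c ≤ a + r) :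
    |a - max c b| ≤ r := by
  obtain ⟨hab_lower, hab_upper⟩ := abs_le.1 hab
  have upper : max c b ≤ a + r := max_le hc (by linarith)
  have lower : b ≤ max c b := le_max_right c b
  exact abs_le.2 ⟨by linarith, by linarith⟩

lemma le_two_mul_of_sq_le {s t : K} (ht : 0 ≤ t) (hst : s ^ 2 ≤ t * s + 2 * t ^ 2) :
    s ≤ 2 * t := by
  by_contra! hlt
  have factored_pos : 0 < (s - 2 * t) * (s + t) := mul_pos (by linarith) (by linarith)
  linarith

end OrderedField

section PropensityRatio

variable {δ g p : ℝ}

lemma abs_div_max_sq_sub_one_le (hg : 0 ≤ g) (hp : 0 < p) (hδ : 0 ≤ δ)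
    (hest : |p - g| ≤ δ * √g + δ ^ 2) :
    |g / max (δ ^ 2) p - 1| ≤ 3 * δ / √(max (δ ^ 2) p) := by
  have error : |g - max (δ ^ 2) p| ≤ δ * √g + δ ^ 2 :=
    abs_sub_max_le_of_abs_sub_le hest (by linarith [mul_nonneg hδ (Real.sqrt_nonneg g)])
  have hm : 0 < max (δ ^ 2) p := lt_max_of_lt_right hp
  have hδt : δ ≤ √(max (δ ^ 2) p) := Real.le_sqrt_of_sq_le (le_max_left _ _)
  have ht : 0 < √(max (δ ^ 2) p) := Real.sqrt_pos.2 hm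
  have ht_sq : √(max (δ ^ 2) p) ^ 2 = max (δ ^ 2) p := Real.sq_sqrt hm.le
  generalize √(max (δ ^ 2) p) = t at *
  rw [← ht_sq] at error ⊢
  have sqrt_le : √g ≤ 2 * t := by
    refine le_two_mul_of_sq_le ht.le ?_
    calc √g ^ 2 = g := Real.sq_sqrt hg
      _ ≤ t ^ 2 + (δ * √g + δ ^ 2) := by linarith [(abs_le.1 error).2]
      _ ≤ t ^ 2 + (t * √g + t ^ 2) := by gcongr
      _ = t * √g + 2 * t ^ 2 := by ring
  calc |g / t ^ 2 - 1| = |g - t ^ 2| / t ^ 2 := by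
        rw [div_sub_one (by positivity), abs_div, abs_of_pos (by positivity : 0 < t ^ 2)]
    _ ≤ (δ * (2 * t) + δ * t) / t ^ 2 := by
        gcongr
        exact error.trans (by rw [sq δ]; gcongr)
    _ = 3 * δ / t := by field_simp; ring

lemma abs_div_max_sq_sub_one_le_div_sqrt (hg : 0 ≤ g) (hp : p ∈ Set.Ioo 0 1) (hδ : 0 ≤ δ)
    (hest : |p - g| ≤ δ * √(g * (1 - g)) + δ ^ 2) :
    |g / max (δ ^ 2) p - 1| ≤ 3 * δ / √(p * (1 - p)) := by
  have variance_pos : 0 < p * (1 - p) := mul_pos hp.1 (sub_pos.2 hp.2)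
  have variance_le (x : ℝ) : x * (1 - x) ≤ x := by linarith [sq_nonneg x]
  have hest_sqrt : |p - g| ≤ δ * √g + δ ^ 2 := hest.trans (by gcongr; exact variance_le g)
  refine (abs_div_max_sq_sub_one_le hg hp.1 hδ hest_sqrt).trans ?_
  gcongr
  exact (variance_le p).trans (le_max_right _ _)

end PropensityRatio

section Estimator

open MeasureTheory ProbabilityTheory

variable {Ω : Type*}

/-- The inverse-propensity-weighted estimator of the treatment effect `v₁ - v₀`, for the treatment
event `D` and the estimated propensity `p`. Both inverse weights are truncated at the level `ε`,
which is `δ²` in the bias bound. -/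
noncomputable def truncatedIPW (D : Set Ω) (ε p : ℝ) (v₁ v₀ : Ω → ℝ) (ω : Ω) : ℝ :=
  D.indicator v₁ ω / max ε p - Dᶜ.indicator v₀ ω / max ε (1 - p)

lemma truncatedIPW_preimage_Iic {α : Type*} [LinearOrder α] (M : Ω → α) (b : α) (ε p : ℝ)
    (v₁ v₀ : Ω → ℝ) (ω : Ω) :
    truncatedIPW (M ⁻¹' Set.Iic b) ε p v₁ v₀ ω =
      (if M ω ≤ b then v₁ ω / max ε p else 0) -
        (if b < M ω then v₀ ω / max ε (1 - p) else 0) := by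
  rcases le_or_gt (M ω) b with win | lose
  · simp [truncatedIPW, win, win.not_gt]
  · simp [truncatedIPW, lose, lose.not_ge]

variable [MeasurableSpace Ω] {μ : Measure Ω} {D : Set Ω} {v v₁ v₀ : Ω → ℝ}

lemma indepFun_indicator_preimage {α β : Type*} [MeasurableSpace α] [MeasurableSpace β]
    {X : Ω → β} {M : Ω → α} {S : Set α} (hindep : IndepFun X M μ) (hS : MeasurableSet S) :
    IndepFun X ((M ⁻¹' S).indicator (1 : Ω → ℝ)) μ :=
  hindep.comp measurable_id (measurable_one.indicator hS)

lemma integral_indicator_eq_mul_of_indepFun (hD : MeasurableSet D) (hv : AEStronglyMeasurable v μ)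
    (hindep : IndepFun v (D.indicator (1 : Ω → ℝ)) μ) :
    ∫ ω, D.indicator v ω ∂μ = (∫ ω, v ω ∂μ) * μ.real D := by
  have indicator_eq_mul : D.indicator v = v * D.indicator 1 := by
    ext ω
    simp [← Set.indicator_mul_right]
  rw [indicator_eq_mul, hindep.integral_mul_eq_mul_integral hv
    (measurable_one.indicator hD).aestronglyMeasurable, integral_indicator_one hD]

variable [IsProbabilityMeasure μ]

lemma integral_truncatedIPW (hD : MeasurableSet D) (hv₁ : Integrable v₁ μ) (hv₀ : Integrable v₀ μ)
    (hindep₁ : IndepFun v₁ (D.indicator (1 : Ω → ℝ)) μ)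
    (hindep₀ : IndepFun v₀ (D.indicator (1 : Ω → ℝ)) μ) (ε p : ℝ) :
    ∫ ω, truncatedIPW D ε p v₁ v₀ ω ∂μ =
      (∫ ω, v₁ ω ∂μ) * (μ.real D / max ε p) -
        (∫ ω, v₀ ω ∂μ) * ((1 - μ.real D) / max ε (1 - p)) := by
  have hindep_compl : IndepFun v₀ (Dᶜ.indicator (1 : Ω → ℝ)) μ := by
    rw [Set.indicator_compl]
    exact hindep₀.comp measurable_id (measurable_const.sub measurable_id (f := fun _ ↦ (1 : ℝ)))
  simp only [truncatedIPW]
  rw [integral_sub ((hv₁.indicator hD).div_const _) ((hv₀.indicator hD.compl).div_const _),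
    integral_div, integral_div, integral_indicator_eq_mul_of_indepFun hD hv₁.1 hindep₁,
    integral_indicator_eq_mul_of_indepFun hD.compl hv₀.1 hindep_compl,
    probReal_compl_eq_one_sub hD, mul_div_assoc, mul_div_assoc]

theorem truncated_ipw_bias_general (hD : MeasurableSet D) (hv₁ : Integrable v₁ μ)
    (hv₀ : Integrable v₀ μ) (hindep₁ : IndepFun v₁ (D.indicator (1 : Ω → ℝ)) μ)
    (hindep₀ : IndepFun v₀ (D.indicator (1 : Ω → ℝ)) μ) {δ p : ℝ} (hδ : 0 ≤ δ)
    (hp : p ∈ Set.Ioo 0 1)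
    (hest : |p - μ.real D| ≤ δ * √(μ.real D * (1 - μ.real D)) + δ ^ 2) :
    |∫ ω, truncatedIPW D (δ ^ 2) p v₁ v₀ ω ∂μ - ∫ ω, (v₁ ω - v₀ ω) ∂μ| ≤
      3 * (|∫ ω, v₁ ω ∂μ| + |∫ ω, v₀ ω ∂μ|) * δ * (1 / √(p * (1 - p))) := by
  rw [integral_truncatedIPW hD hv₁ hv₀ hindep₁ hindep₀, integral_sub hv₁ hv₀]
  have hg_le : μ.real D ≤ 1 := measureReal_le_one
  have hg_nonneg : 0 ≤ μ.real D := measureReal_nonneg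
  generalize μ.real D = g at *
  generalize ∫ ω, v₁ ω ∂μ = x, ∫ ω, v₀ ω ∂μ = y
  have treated : |g / max (δ ^ 2) p - 1| ≤ 3 * δ / √(p * (1 - p)) :=
    abs_div_max_sq_sub_one_le_div_sqrt hg_nonneg hp hδ hest
  have control : |(1 - g) / max (δ ^ 2) (1 - p) - 1| ≤ 3 * δ / √(p * (1 - p)) := by
    have hp_compl : 1 - p ∈ Set.Ioo 0 1 := ⟨sub_pos.2 hp.2, sub_lt_self 1 hp.1⟩
    have hest_compl : |(1 - p) - (1 - g)| ≤ δ * √((1 - g) * (1 - (1 - g))) + δ ^ 2 := by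
      rwa [sub_sub_sub_cancel_left, abs_sub_comm, sub_sub_cancel, mul_comm (1 - g)]
    simpa only [sub_sub_cancel, mul_comm (1 - p)] using
      abs_div_max_sq_sub_one_le_div_sqrt (sub_nonneg.2 hg_le) hp_compl hδ hest_compl
  calc |x * (g / max (δ ^ 2) p) - y * ((1 - g) / max (δ ^ 2) (1 - p)) - (x - y)|
      = |x * (g / max (δ ^ 2) p - 1) - y * ((1 - g) / max (δ ^ 2) (1 - p) - 1)| := by ring_nf
    _ ≤ |x| * |g / max (δ ^ 2) p - 1| + |y| * |(1 - g) / max (δ ^ 2) (1 - p) - 1| := by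
        simpa only [abs_mul] using abs_sub (x * _) (y * _)
    _ ≤ |x| * (3 * δ / √(p * (1 - p))) + |y| * (3 * δ / √(p * (1 - p))) := by gcongr
    _ = 3 * (|x| + |y|) * δ * (1 / √(p * (1 - p))) := by ring

lemma abs_integral_le_one_of_mem_Icc (hv : Integrable v μ) (hvr : ∀ᵐ ω ∂μ, v ω ∈ Set.Icc 0 1) :
    |∫ ω, v ω ∂μ| ≤ 1 := by
  have mean_mem : ∫ ω, v ω ∂μ ∈ Set.Icc 0 1 := (convex_Icc 0 1).integral_mem isClosed_Icc hvr hv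
  exact (abs_of_nonneg mean_mem.1).trans_le mean_mem.2

end Estimator

open MeasureTheory ProbabilityTheory in
/-- **Bias of the truncated inverse-propensity-weighted estimator.** Let `M` be a random
variable with CDF `G`, and `v₁, v₀ ∈ [0,1]` random variables with `(v₁, v₀)` independent of
`M`. For a bid `b`, truncation level `δ ∈ (0,1)`, and estimated propensity `ĝ ∈ (0,1)` with
`|ĝ − G(b)| ≤ δ√(G(b)(1−G(b))) + δ²`, the truncated IPW estimator
`ẽ = 1[M ≤ b]v₁/max{δ², ĝ} − 1[M > b]v₀/max{δ², 1−ĝ}` satisfies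
`|E[ẽ] − E[v₁ − v₀]| ≤ 20√6·δ·σ` with `σ = 1/√(ĝ(1−ĝ))`. -/
theorem truncated_ipw_bias
    {Ω : Type*} [MeasurableSpace Ω] (μ : Measure Ω) [IsProbabilityMeasure μ]
    (M v1 v0 : Ω → ℝ)
    (hMmeas : Measurable M) (hv1meas : Measurable v1) (hv0meas : Measurable v0)
    (hv1r : ∀ ω, v1 ω ∈ Set.Icc (0 : ℝ) 1) (hv0r : ∀ ω, v0 ω ∈ Set.Icc (0 : ℝ) 1)
    (hindep : IndepFun (fun ω => (v1 ω, v0 ω)) M μ)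
    (b : ℝ) (δ : ℝ) (hδ : δ ∈ Set.Ioo (0 : ℝ) 1)
    (ghat : ℝ) (hghat : ghat ∈ Set.Ioo (0 : ℝ) 1)
    (g : ℝ) (hg : g = (μ {ω | M ω ≤ b}).toReal)
    (hest : |ghat - g| ≤ δ * Real.sqrt (g * (1 - g)) + δ ^ 2) :
    |(∫ ω, ((if M ω ≤ b then v1 ω / max (δ ^ 2) ghat else 0)
          - (if b < M ω then v0 ω / max (δ ^ 2) (1 - ghat) else 0)) ∂μ)
        - ∫ ω, (v1 ω - v0 ω) ∂μ|
      ≤ 20 * Real.sqrt 6 * δ * (1 / Real.sqrt (ghat * (1 - ghat))) := by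
  have hv1 : Integrable v1 μ := .of_mem_Icc 0 1 hv1meas.aemeasurable (.of_forall hv1r)
  have hv0 : Integrable v0 μ := .of_mem_Icc 0 1 hv0meas.aemeasurable (.of_forall hv0r)
  have constant_le : 3 * (|∫ ω, v1 ω ∂μ| + |∫ ω, v0 ω ∂μ|) ≤ 20 * √6 := by
    linarith [abs_integral_le_one_of_mem_Icc hv1 (.of_forall hv1r),
      abs_integral_le_one_of_mem_Icc hv0 (.of_forall hv0r),
      Real.one_le_sqrt.2 (by norm_num : (1 : ℝ) ≤ 6)]
  have bias := truncated_ipw_bias_general (hMmeas measurableSet_Iic) hv1 hv0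
    (indepFun_indicator_preimage (hindep.comp measurable_fst measurable_id) measurableSet_Iic)
    (indepFun_indicator_preimage (hindep.comp measurable_snd measurable_id) measurableSet_Iic)
    hδ.1.le hghat (hg ▸ hest)
  simp only [truncatedIPW_preimage_Iic] at bias
  exact bias.trans (by gcongr; exact hδ.1.le)
end

section
/- Let δ > 0 and let g, ĝ ∈ [0,1] satisfy |ĝ − g| ≤ δ·√(g(1−g)) + δ². Then: (i) if ĝ ≥ 6δ² then g ≥ 3δ²; and (ii) if ĝ < 6δ² then g < 11δ². -/
/-!
Write `σ` for the standard deviation `√(g(1 - g))`, so that `σ² ≤ g`. Young's inequality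
`δσ ≤ σ²/4 + δ²` absorbs the deviation term into a quarter of `g`, leaving
`|ĝ - g| ≤ g/4 + 2δ²`. Hence `g ≥ (4/5)(ĝ - 2δ²)` and `g ≤ (4/3)(ĝ + 2δ²)`, which at `ĝ = 6δ²` are
`16δ²/5 > 3δ²` and `32δ²/3 < 11δ²`.
-/

section OrderedField

variable {𝕜 : Type*} [Field 𝕜] [LinearOrder 𝕜] [IsStrictOrderedRing 𝕜] {δ σ g ghat : 𝕜}

theorem abs_sub_le_mul_add_of_sq_le {ε : 𝕜} (hε : 0 < ε) (hσ : σ ^ 2 ≤ g)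
    (hest : |ghat - g| ≤ δ * σ + δ ^ 2) :
    |ghat - g| ≤ ε / 2 * g + (1 + ε⁻¹ / 2) * δ ^ 2 := by
  have young : 2 * σ * δ ≤ ε * σ ^ 2 + ε⁻¹ * δ ^ 2 := two_mul_le_add_mul_sq hε
  have deviation_le : ε * σ ^ 2 ≤ ε * g := by gcongr
  linarith

theorem win_probability_comparison_general (hσ : σ ^ 2 ≤ g)
    (hest : |ghat - g| ≤ δ * σ + δ ^ 2) :
    (6 * δ ^ 2 ≤ ghat → 3 * δ ^ 2 ≤ g) ∧ (ghat < 6 * δ ^ 2 → g < 11 * δ ^ 2) := by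
  have hclose : |ghat - g| ≤ 1 / 4 * g + 2 * δ ^ 2 :=
    (abs_sub_le_mul_add_of_sq_le one_half_pos hσ hest).trans_eq (by ring)
  obtain ⟨estimate_le, le_estimate⟩ := abs_sub_le_iff.mp hclose
  constructor
  · intro estimate_large
    linarith [sq_nonneg δ]
  · intro estimate_small
    linarith [sq_nonneg δ]

end OrderedField

theorem sq_sqrt_mul_one_sub_le {g : ℝ} (hg : g ∈ Set.Icc (0 : ℝ) 1) :
    √(g * (1 - g)) ^ 2 ≤ g := by
  rw [Real.sq_sqrt (mul_nonneg hg.1 (sub_nonneg.mpr hg.2))]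
  exact mul_le_of_le_one_right hg.1 (sub_le_self 1 hg.1)

/-- **Comparability of true and estimated win probabilities at the `δ²` scale.**
If `|ĝ − g| ≤ δ·√(g(1−g)) + δ²` with `g, ĝ ∈ [0,1]` and `δ > 0`, then
(i) `ĝ ≥ 6δ²` implies `g ≥ 3δ²`, and (ii) `ĝ < 6δ²` implies `g < 11δ²`. -/
theorem win_probability_comparison
    (δ : ℝ) (hδ : 0 < δ)
    (g ghat : ℝ)
    (hg : g ∈ Set.Icc (0 : ℝ) 1) (hghat : ghat ∈ Set.Icc (0 : ℝ) 1)
    (hest : |ghat - g| ≤ δ * Real.sqrt (g * (1 - g)) + δ ^ 2) :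
    (6 * δ ^ 2 ≤ ghat → 3 * δ ^ 2 ≤ g) ∧ (ghat < 6 * δ ^ 2 → g < 11 * δ ^ 2) := by
  exact win_probability_comparison_general (sq_sqrt_mul_one_sub_le hg) hest
end

section
/- Let d, n be positive integers and D ∈ ℝ^{d×n}, and define A = I_d + D Dᵀ. Then for every x ∈ ℝ^d and every ξ ∈ ℝ^n, |xᵀ A⁻¹ D ξ| ≤ √(xᵀA⁻¹x) · ‖ξ‖₂. -/
/-!
Cauchy–Schwarz in the inner product of `A⁻¹` bounds `|xᵀA⁻¹Dξ|` by `‖x‖_{A⁻¹} ‖Dξ‖_{A⁻¹}`,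
and `‖Dξ‖²_{A⁻¹} = ξᵀ(DᵀA⁻¹D)ξ`. The two Schur complements of the block matrix `[A, D; Dᵀ, I]` show
that `DᵀA⁻¹D ⪯ I` is equivalent to `DDᵀ ⪯ A`, which for `A = I + DDᵀ` says `0 ⪯ I`.
-/

section

open Matrix RCLike
open scoped ComplexOrder

variable {𝕜 m n : Type*} [RCLike 𝕜] [Fintype m] [Fintype n]

theorem norm_star_dotProduct_mulVec_le {M : Matrix m m 𝕜} (hM : M.PosSemidef) (x y : m → 𝕜) :
    ‖star x ⬝ᵥ (M *ᵥ y)‖ ≤ √(re (star x ⬝ᵥ (M *ᵥ x))) * √(re (star y ⬝ᵥ (M *ᵥ y))) := by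
  let := M.toSeminormedAddCommGroup hM
  let := M.toInnerProductSpace hM
  have inner_eq (u v : m → 𝕜) : star u ⬝ᵥ (M *ᵥ v) = inner 𝕜 u v := dotProduct_comm _ _
  simpa only [inner_eq, ← norm_eq_sqrt_re_inner] using norm_inner_le_norm (𝕜 := 𝕜) x y

variable [DecidableEq m]

theorem posSemidef_sub_conjTranspose_mul_inv_mul_iff {K : Type*} [Field K] [PartialOrder K]
    [StarRing K] [StarOrderedRing K] [DecidableEq n] {A : Matrix m m K} {C : Matrix n n K}
    (hA : A.PosDef) (hC : C.PosDef) (B : Matrix m n K) :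
    (C - Bᴴ * A⁻¹ * B).PosSemidef ↔ (A - B * C⁻¹ * Bᴴ).PosSemidef := by
  let := hA.isUnit.invertible
  let := hC.isUnit.invertible
  rw [← hA.fromBlocks₁₁, ← hC.fromBlocks₂₂]

theorem re_star_mulVec_dotProduct_inv_mulVec_le {A : Matrix m m 𝕜} (hA : A.PosDef)
    {D : Matrix m n 𝕜} (hD : (A - D * Dᴴ).PosSemidef) (ξ : n → 𝕜) :
    re (star (D *ᵥ ξ) ⬝ᵥ (A⁻¹ *ᵥ (D *ᵥ ξ))) ≤ ∑ i, ‖ξ i‖ ^ 2 := by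
  classical
  have gram_le_one : (1 - Dᴴ * A⁻¹ * D).PosSemidef :=
    (posSemidef_sub_conjTranspose_mul_inv_mul_iff hA .one D).2 (by simpa using hD)
  have gram_form : star (D *ᵥ ξ) ⬝ᵥ (A⁻¹ *ᵥ (D *ᵥ ξ)) = star ξ ⬝ᵥ ((Dᴴ * A⁻¹ * D) *ᵥ ξ) := by
    simp only [star_mulVec, dotProduct_mulVec, vecMul_vecMul, Matrix.mul_assoc]
  have norm_sq : re (star ξ ⬝ᵥ ξ) = ∑ i, ‖ξ i‖ ^ 2 := by
    simp only [dotProduct, Pi.star_apply, star_def, RCLike.conj_mul, map_sum, ← ofReal_pow,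
      ofReal_re]
  rw [gram_form, ← norm_sq]
  simpa [sub_mulVec, dotProduct_sub] using gram_le_one.re_dotProduct_nonneg ξ

theorem ridge_bias_propagation_general {A : Matrix m m 𝕜} (hA : A.PosDef)
    {D : Matrix m n 𝕜} (hD : (A - D * Dᴴ).PosSemidef) (x : m → 𝕜) (ξ : n → 𝕜) :
    ‖star x ⬝ᵥ (A⁻¹ *ᵥ (D *ᵥ ξ))‖ ≤ √(re (star x ⬝ᵥ (A⁻¹ *ᵥ x))) * √(∑ i, ‖ξ i‖ ^ 2) :=
  calc ‖star x ⬝ᵥ (A⁻¹ *ᵥ (D *ᵥ ξ))‖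
    _ ≤ √(re (star x ⬝ᵥ (A⁻¹ *ᵥ x))) * √(re (star (D *ᵥ ξ) ⬝ᵥ (A⁻¹ *ᵥ (D *ᵥ ξ)))) :=
      norm_star_dotProduct_mulVec_le hA.inv.posSemidef x (D *ᵥ ξ)
    _ ≤ √(re (star x ⬝ᵥ (A⁻¹ *ᵥ x))) * √(∑ i, ‖ξ i‖ ^ 2) := by
      gcongr
      exact re_star_mulVec_dotProduct_inv_mulVec_le hA hD ξ

end

open Matrix in
/-- **Bias propagation through regularized least squares.** With `A = I + DDᵀ`, for every
`x ∈ ℝ^d` and `ξ ∈ ℝⁿ`, `|xᵀA⁻¹Dξ| ≤ ‖x‖_{A⁻¹}·‖ξ‖₂`. -/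
theorem ridge_bias_propagation
    (d n : ℕ) (hd : 0 < d) (hn : 0 < n)
    (D : Matrix (Fin d) (Fin n) ℝ)
    (A : Matrix (Fin d) (Fin d) ℝ) (hA : A = 1 + D * Dᵀ)
    (x : Fin d → ℝ) (ξ : Fin n → ℝ) :
    |x ⬝ᵥ (A⁻¹ *ᵥ (D *ᵥ ξ))|
      ≤ Real.sqrt (x ⬝ᵥ (A⁻¹ *ᵥ x)) * Real.sqrt (∑ i, ξ i ^ 2) := by
  subst hA
  simpa using ridge_bias_propagation_general
    (PosDef.one.add_posSemidef (posSemidef_self_mul_conjTranspose D))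
    (by simpa using PosSemidef.one) x ξ
end

section
/- Let d, n be positive integers, D ∈ ℝ^{d×n}, V, Ξ ∈ ℝ^n, and θ* ∈ ℝ^d with ‖θ*‖₂ ≤ 1. Define A = I_d + D Dᵀ and θ̂ = A⁻¹ D V. Then for every x ∈ ℝ^d, |xᵀθ̂ − xᵀθ*| ≤ |xᵀ A⁻¹ D (V − Ξ − Dᵀθ*)| + √(xᵀA⁻¹x)·‖Ξ‖₂ + √(xᵀA⁻¹x). -/
/-!
Writing `A = λ I + D Dᵀ`, the identity `θ* = A⁻¹ (λ θ* + D Dᵀ θ*)` splits the estimation error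
`A⁻¹ D V - θ*` into `A⁻¹ D (V - Ξ - Dᵀ θ*)`, `A⁻¹ D Ξ` and `-λ A⁻¹ θ*`. The last two have the form
`A⁻¹ B w` with `B Bᵀ ≤ A` in the Loewner order, for `B = D` and `B = √λ I`, and then
`‖Bᵀ A⁻¹ x‖² = (A⁻¹ x)ᵀ B Bᵀ (A⁻¹ x) ≤ (A⁻¹ x)ᵀ A (A⁻¹ x) = xᵀ A⁻¹ x`, so both are controlled by the
Cauchy–Schwarz inequality.
-/

section RidgeRegression

open Matrix

variable {m n : Type*} [Fintype n]

theorem abs_dotProduct_le_sqrt_mul_sqrt (u v : n → ℝ) :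
    |u ⬝ᵥ v| ≤ √(∑ i, u i ^ 2) * √(∑ i, v i ^ 2) := by
  rw [← Real.sqrt_mul (Finset.sum_nonneg fun i _ ↦ sq_nonneg (u i))]
  exact Real.abs_le_sqrt (Finset.sum_mul_sq_le_sq_mul_sq Finset.univ u v)

/-- The regularized Gram matrix `A = λ I + D Dᵀ` of ridge regression. The contexts are the columns
of `D`, so that `A` is indexed by the coordinates of the parameter. -/
def ridgeGram [DecidableEq m] (lam : ℝ) (D : Matrix m n ℝ) : Matrix m m ℝ :=
  lam • 1 + D * Dᵀ

theorem posDef_ridgeGram [DecidableEq m] [Finite m] {lam : ℝ} (hlam : 0 < lam) (D : Matrix m n ℝ) :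
    (ridgeGram lam D).PosDef :=
  (PosDef.one.smul hlam).add_posSemidef (by simpa using posSemidef_self_mul_conjTranspose D)

variable [Fintype m]

theorem sum_sq_transpose_mulVec {R : Type*} [CommSemiring R] (B : Matrix m n R) (y : m → R) :
    ∑ i, (Bᵀ *ᵥ y) i ^ 2 = y ⬝ᵥ ((B * Bᵀ) *ᵥ y) := by
  rw [← mulVec_mulVec, dotProduct_mulVec, ← mulVec_transpose]
  simp only [dotProduct, sq]

variable [DecidableEq m]

theorem sum_sq_transpose_mulVec_inv_mulVec_le {A : Matrix m m ℝ} (hA : A.PosDef)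
    {B : Matrix m n ℝ} (hBA : (A - B * Bᵀ).PosSemidef) (x : m → ℝ) :
    ∑ i, (Bᵀ *ᵥ (A⁻¹ *ᵥ x)) i ^ 2 ≤ x ⬝ᵥ (A⁻¹ *ᵥ x) := by
  set y := A⁻¹ *ᵥ x with hy
  have hAy : A *ᵥ y = x := by
    rw [hy, mulVec_mulVec, mul_nonsing_inv A hA.det_pos.ne'.isUnit, one_mulVec]
  have hgap : 0 ≤ y ⬝ᵥ ((A - B * Bᵀ) *ᵥ y) := hBA.dotProduct_mulVec_nonneg y
  rw [sub_mulVec, dotProduct_sub, hAy, dotProduct_comm y x] at hgap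
  rw [sum_sq_transpose_mulVec]
  exact sub_nonneg.mp hgap

theorem abs_dotProduct_inv_mulVec_mulVec_le {A : Matrix m m ℝ} (hA : A.PosDef)
    {B : Matrix m n ℝ} (hBA : (A - B * Bᵀ).PosSemidef) (x : m → ℝ) (w : n → ℝ) :
    |x ⬝ᵥ (A⁻¹ *ᵥ (B *ᵥ w))| ≤ √(x ⬝ᵥ (A⁻¹ *ᵥ x)) * √(∑ i, w i ^ 2) := by
  have hsymm : A⁻¹ᵀ = A⁻¹ := IsSymm.inv (by simpa using hA.isHermitian)
  calc |x ⬝ᵥ (A⁻¹ *ᵥ (B *ᵥ w))|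
      = |(Bᵀ *ᵥ (A⁻¹ *ᵥ x)) ⬝ᵥ w| := by
        rw [dotProduct_mulVec, ← mulVec_transpose, hsymm, dotProduct_mulVec, ← mulVec_transpose]
    _ ≤ √(∑ i, (Bᵀ *ᵥ (A⁻¹ *ᵥ x)) i ^ 2) * √(∑ i, w i ^ 2) :=
        abs_dotProduct_le_sqrt_mul_sqrt _ w
    _ ≤ √(x ⬝ᵥ (A⁻¹ *ᵥ x)) * √(∑ i, w i ^ 2) := by
        gcongr
        exact sum_sq_transpose_mulVec_inv_mulVec_le hA hBA x

/-- The ridge regression estimator `θ̂ = A⁻¹ D V` from the contexts `D` and the observations `V`,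
where `A = λ I + D Dᵀ`. -/
noncomputable def ridgeEstimator (lam : ℝ) (D : Matrix m n ℝ) (V : n → ℝ) : m → ℝ :=
  (ridgeGram lam D)⁻¹ *ᵥ (D *ᵥ V)

theorem ridgeGram_mulVec (lam : ℝ) (D : Matrix m n ℝ) (θ : m → ℝ) :
    ridgeGram lam D *ᵥ θ = lam • θ + D *ᵥ (Dᵀ *ᵥ θ) := by
  rw [ridgeGram, add_mulVec, smul_mulVec, one_mulVec, mulVec_mulVec]

theorem ridgeEstimator_sub {lam : ℝ} (hlam : 0 < lam) (D : Matrix m n ℝ) (V Ξ : n → ℝ)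
    (θ : m → ℝ) :
    ridgeEstimator lam D V - θ =
      (ridgeGram lam D)⁻¹ *ᵥ (D *ᵥ (V - Ξ - Dᵀ *ᵥ θ)) + (ridgeGram lam D)⁻¹ *ᵥ (D *ᵥ Ξ)
        - (ridgeGram lam D)⁻¹ *ᵥ (lam • θ) := by
  have hθ : θ = (ridgeGram lam D)⁻¹ *ᵥ (lam • θ + D *ᵥ (Dᵀ *ᵥ θ)) := by
    rw [← ridgeGram_mulVec, mulVec_mulVec,
      nonsing_inv_mul _ (posDef_ridgeGram hlam D).det_pos.ne'.isUnit, one_mulVec]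
  nth_rw 1 [hθ]
  simp only [ridgeEstimator, mulVec_sub, mulVec_add]
  abel

theorem abs_dotProduct_ridgeGram_inv_mulVec_mulVec_le {lam : ℝ} (hlam : 0 < lam)
    (D : Matrix m n ℝ) (x : m → ℝ) (w : n → ℝ) :
    |x ⬝ᵥ ((ridgeGram lam D)⁻¹ *ᵥ (D *ᵥ w))| ≤
      √(x ⬝ᵥ ((ridgeGram lam D)⁻¹ *ᵥ x)) * √(∑ i, w i ^ 2) := by
  refine abs_dotProduct_inv_mulVec_mulVec_le (posDef_ridgeGram hlam D) ?_ x w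
  rw [ridgeGram, add_sub_cancel_right]
  exact PosSemidef.one.smul hlam.le

theorem abs_dotProduct_ridgeGram_inv_mulVec_smul_le {lam : ℝ} (hlam : 0 < lam)
    (D : Matrix m n ℝ) (x θ : m → ℝ) :
    |x ⬝ᵥ ((ridgeGram lam D)⁻¹ *ᵥ (lam • θ))| ≤
      √(x ⬝ᵥ ((ridgeGram lam D)⁻¹ *ᵥ x)) * (√lam * √(∑ i, θ i ^ 2)) := by
  have hsq : (√lam • (1 : Matrix m m ℝ)) * (√lam • (1 : Matrix m m ℝ))ᵀ = lam • 1 := by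
    simp [smul_smul, Real.mul_self_sqrt hlam.le]
  have hdom : (ridgeGram lam D - (√lam • 1) * (√lam • 1)ᵀ).PosSemidef := by
    rw [hsq, ridgeGram, add_sub_cancel_left]
    simpa using posSemidef_self_mul_conjTranspose D
  have hmul : (√lam • (1 : Matrix m m ℝ)) *ᵥ (√lam • θ) = lam • θ := by
    rw [smul_mulVec, one_mulVec, smul_smul, Real.mul_self_sqrt hlam.le]
  have hnorm : √(∑ i, (√lam • θ) i ^ 2) = √lam * √(∑ i, θ i ^ 2) := by
    simp only [Pi.smul_apply, smul_eq_mul, mul_pow, Real.sq_sqrt hlam.le, ← Finset.mul_sum,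
      Real.sqrt_mul hlam.le]
  rw [← hmul, ← hnorm]
  exact abs_dotProduct_inv_mulVec_mulVec_le (posDef_ridgeGram hlam D) hdom x (√lam • θ)

theorem weighted_ridge_error_decomposition_general {lam : ℝ} (hlam : 0 < lam)
    (D : Matrix m n ℝ) (V Ξ : n → ℝ) (θ x : m → ℝ) :
    |x ⬝ᵥ ridgeEstimator lam D V - x ⬝ᵥ θ| ≤
      |x ⬝ᵥ ((ridgeGram lam D)⁻¹ *ᵥ (D *ᵥ (V - Ξ - Dᵀ *ᵥ θ)))|
        + √(x ⬝ᵥ ((ridgeGram lam D)⁻¹ *ᵥ x)) * √(∑ i, Ξ i ^ 2)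
        + √(x ⬝ᵥ ((ridgeGram lam D)⁻¹ *ᵥ x)) * (√lam * √(∑ i, θ i ^ 2)) := by
  rw [← dotProduct_sub, ridgeEstimator_sub hlam D V Ξ θ, dotProduct_sub, dotProduct_add]
  refine (abs_sub _ _).trans (add_le_add ((abs_add_le _ _).trans (add_le_add le_rfl ?_)) ?_)
  · exact abs_dotProduct_ridgeGram_inv_mulVec_mulVec_le hlam D x Ξ
  · exact abs_dotProduct_ridgeGram_inv_mulVec_smul_le hlam D x θ

end RidgeRegression

open Matrix in
/-- **Deterministic error decomposition for weighted ridge regression with bias.**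
With (weighted) contexts `D`, biased observations `V`, bias vector `Ξ`, true parameter
`θ*` with `‖θ*‖₂ ≤ 1`, `A = I + DDᵀ`, and `θ̂ = A⁻¹DV`, for every `x`:
`|xᵀθ̂ − xᵀθ*| ≤ |xᵀA⁻¹D(V − Ξ − Dᵀθ*)| + ‖x‖_{A⁻¹}‖Ξ‖₂ + ‖x‖_{A⁻¹}`. -/
theorem weighted_ridge_error_decomposition
    (d n : ℕ) (hd : 0 < d) (hn : 0 < n)
    (D : Matrix (Fin d) (Fin n) ℝ) (V Ξ : Fin n → ℝ)
    (θstar : Fin d → ℝ) (hθ : Real.sqrt (∑ i, θstar i ^ 2) ≤ 1)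
    (A : Matrix (Fin d) (Fin d) ℝ) (hA : A = 1 + D * Dᵀ)
    (θhat : Fin d → ℝ) (hθhat : θhat = A⁻¹ *ᵥ (D *ᵥ V))
    (x : Fin d → ℝ) :
    |x ⬝ᵥ θhat - x ⬝ᵥ θstar|
      ≤ |x ⬝ᵥ (A⁻¹ *ᵥ (D *ᵥ (V - Ξ - Dᵀ *ᵥ θstar)))|
        + Real.sqrt (x ⬝ᵥ (A⁻¹ *ᵥ x)) * Real.sqrt (∑ i, Ξ i ^ 2)
        + Real.sqrt (x ⬝ᵥ (A⁻¹ *ᵥ x)) := by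
  subst hA hθhat
  simpa only [ridgeEstimator, ridgeGram, one_smul, Real.sqrt_one, one_mul] using
    (weighted_ridge_error_decomposition_general one_pos D V Ξ θstar x).trans <|
      add_le_add_right (mul_le_of_le_one_right (Real.sqrt_nonneg _) (by simpa using hθ)) _
end
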